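/- Let f ∈ ℤ[X] be monic with f = g₁⋯g_k, where g₁,…,g_k ∈ ℤ[X] are irreducible, monic and pairwise distinct, and let Z_f = ℤ[X]/(f). Then there exists a real constant c > 0 such that Σ_{n≤N} a_n(Z_f) ∼ c·N·(log N)^{k-1} as N → ∞, i.e. lim_{N→∞} (Σ_{n≤N} a_n(Z_f)) / (N (log N)^{k-1}) = c. -/

import Mathlib

open Filter Topology

/-!
Sending `X` to a root of each `gᵢ` embeds `R = ℤ[X]/(f)` with finite index `m` into the product
`O = ∏ 𝓞 Kᵢ` of the rings of integers of the fields `Kᵢ = ℚ[X]/(gᵢ)`. The counting function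
`n ↦ a_n(R)` is multiplicative, hence the Dirichlet convolution of its restrictions to `m`-smooth
numbers and to numbers coprime to `m`. Extension and contraction match the ideals of `R` and `O`
whose index is coprime to `m`, so the coprime part is a convolution of `k` functions, one for each
`Kᵢ`. Each of them has linear growth, by the ideal counting theorem for number fields and a sieve
by the primes above `m`; their convolution has growth `c N (log N) ^ (k - 1)`.

Convolving with a nonnegative weight `w` preserves this growth as soon as `∑ w(n) / n < ∞`. For the
smooth part of `n ↦ a_n(O)` the sum converges because the full and the coprime counts of `O` grow
at the same rate. It then converges for `R`, since an ideal `J` of `O` of index `n` equals `I O` for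
boundedly many ideals `I` of `R`, all of index at least `n / m`.
-/

namespace IdealCount

open ArithmeticFunction Polynomial NumberField

/-! ### Growth of summatory functions -/

/-- The summatory function `∑_{1 ≤ n ≤ N} a n`. -/
noncomputable def summatory (a : ArithmeticFunction ℝ) (N : ℕ) : ℝ :=
  ∑ n ∈ Finset.Ioc 0 N, a n

/-- The logarithmic scale `1 + log N`. Unlike `log N`, it is bounded below by `1` for all `N`
(including `N = 0`, where `Real.log 0 = 0`), so that it can be divided by. -/
noncomputable def oneAddLog (N : ℕ) : ℝ := 1 + Real.log N

/-- `∑_{n ≤ N} a n ∼ c N (log N)^j`, expressed with the scale `oneAddLog`. -/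
def HasGrowth (a : ArithmeticFunction ℝ) (j : ℕ) (c : ℝ) : Prop :=
  Tendsto (fun N : ℕ => summatory a N / (N * oneAddLog N ^ j)) atTop (𝓝 c)

section Scale

lemma one_le_oneAddLog (N : ℕ) : 1 ≤ oneAddLog N :=
  le_add_of_nonneg_right (Real.log_natCast_nonneg N)

lemma oneAddLog_pos (N : ℕ) : 0 < oneAddLog N :=
  one_pos.trans_le (one_le_oneAddLog N)

@[simp] lemma oneAddLog_zero : oneAddLog 0 = 1 := by simp [oneAddLog]

lemma oneAddLog_mono : Monotone oneAddLog := by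
  intro M N hMN
  rcases Nat.eq_zero_or_pos M with rfl | hM
  · simpa using one_le_oneAddLog N
  · exact add_le_add_right (Real.log_le_log (by positivity) (by exact_mod_cast hMN)) 1

lemma tendsto_oneAddLog_atTop : Tendsto oneAddLog atTop atTop :=
  tendsto_atTop_add_const_left _ _ (Real.tendsto_log_atTop.comp tendsto_natCast_atTop_atTop)

lemma mul_oneAddLog_pow_pos {N : ℕ} (hN : 0 < N) (j : ℕ) : 0 < (N : ℝ) * oneAddLog N ^ j :=
  mul_pos (by exact_mod_cast hN) (pow_pos (oneAddLog_pos N) j)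

lemma tendsto_oneAddLog_div {M : ℕ → ℕ} {r : ℝ} (hr : 0 < r)
    (h : Tendsto (fun N : ℕ => (M N : ℝ) / N) atTop (𝓝 r)) :
    Tendsto (fun N : ℕ => oneAddLog (M N) / oneAddLog N) atTop (𝓝 1) := by
  have hlim : Tendsto (fun N : ℕ => 1 + Real.log ((M N : ℝ) / N) / oneAddLog N) atTop (𝓝 1) := by
    simpa using ((h.log hr.ne').div_atTop tendsto_oneAddLog_atTop).const_add 1
  refine hlim.congr' ?_
  filter_upwards [h.eventually (lt_mem_nhds hr)] with N hratio
  obtain ⟨hM, hN⟩ : (M N : ℝ) ≠ 0 ∧ (N : ℝ) ≠ 0 := div_ne_zero_iff.1 hratio.ne'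
  rw [Real.log_div hM hN, eq_div_iff (oneAddLog_pos N).ne', add_mul,
    div_mul_cancel₀ _ (oneAddLog_pos N).ne', oneAddLog, oneAddLog]
  ring

lemma tendsto_natDiv_div {d : ℕ} (hd : 0 < d) :
    Tendsto (fun N : ℕ => ((N / d : ℕ) : ℝ) / N) atTop (𝓝 (1 / d)) := by
  refine ((tendsto_nat_floor_mul_div_atTop (R := ℝ) (a := 1 / d) (by positivity)).comp
    (tendsto_natCast_atTop_atTop (R := ℝ))).congr fun N => ?_
  simp only [Function.comp_apply]
  rw [one_div_mul_eq_div, Nat.floor_div_natCast, Nat.floor_natCast]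

lemma tendsto_succ_div :
    Tendsto (fun N : ℕ => ((N + 1 : ℕ) : ℝ) / N) atTop (𝓝 1) := by
  simpa [add_comm] using tendsto_add_mul_div_add_mul_atTop_nhds (1 : ℝ) 0 1 one_ne_zero

lemma tendsto_succ_mul_oneAddLog_sub :
    Tendsto (fun N : ℕ => (N + 1 : ℝ) * (oneAddLog (N + 1) - oneAddLog N)) atTop (𝓝 1) := by
  have h := tendsto_succ_div.mul ((Real.tendsto_mul_log_one_add_div_atTop 1).comp
    (tendsto_natCast_atTop_atTop (R := ℝ)))
  rw [one_mul] at h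
  refine h.congr' ?_
  filter_upwards [eventually_gt_atTop 0] with N hN
  have hN' : (N : ℝ) ≠ 0 := by positivity
  have hlog : Real.log (1 + 1 / N) = oneAddLog (N + 1) - oneAddLog N := by
    rw [one_add_div hN', Real.log_div (by positivity) hN', oneAddLog, oneAddLog]
    push_cast
    ring
  simp only [Function.comp_apply, hlog]
  push_cast
  field_simp

lemma tendsto_succ_mul_oneAddLog_pow_sub (j : ℕ) :
    Tendsto (fun N : ℕ => (N + 1 : ℝ) * (oneAddLog (N + 1) ^ (j + 1) - oneAddLog N ^ (j + 1)) /
      oneAddLog N ^ j) atTop (𝓝 (j + 1)) := by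
  have hratio : Tendsto (fun N : ℕ => oneAddLog (N + 1) / oneAddLog N) atTop (𝓝 1) :=
    tendsto_oneAddLog_div one_pos tendsto_succ_div
  have h := tendsto_succ_mul_oneAddLog_sub.mul
    (tendsto_finsetSum (Finset.range (j + 1)) fun i _ => hratio.pow i)
  simp only [one_pow, Finset.sum_const, Finset.card_range, nsmul_eq_mul, mul_one, one_mul,
    Nat.cast_add, Nat.cast_one] at h
  refine h.congr fun N => ?_
  have hN := (oneAddLog_pos N).ne'
  have hgeom : (oneAddLog (N + 1) - oneAddLog N) *
        ∑ i ∈ Finset.range (j + 1), (oneAddLog (N + 1) / oneAddLog N) ^ i =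
      (oneAddLog (N + 1) ^ (j + 1) - oneAddLog N ^ (j + 1)) / oneAddLog N ^ j := by
    rw [show oneAddLog (N + 1) - oneAddLog N =
      oneAddLog N * (oneAddLog (N + 1) / oneAddLog N - 1) by field_simp, mul_assoc,
      mul_geom_sum, div_pow]
    field_simp
    ring
  rw [mul_assoc, hgeom, mul_div_assoc]

end Scale

section Summatory

variable {a b t w : ArithmeticFunction ℝ} {j : ℕ} {c α β C : ℝ}

@[simp] lemma summatory_zero (a : ArithmeticFunction ℝ) : summatory a 0 = 0 := by
  simp [summatory]

lemma summatory_succ (a : ArithmeticFunction ℝ) (N : ℕ) :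
    summatory a (N + 1) = summatory a N + a (N + 1) := by
  simp [summatory, Finset.sum_Ioc_succ_top]

lemma summatory_nonneg (ha : ∀ n, 0 ≤ a n) (N : ℕ) : 0 ≤ summatory a N :=
  Finset.sum_nonneg fun n _ => ha n

lemma summatory_mul (a b : ArithmeticFunction ℝ) (N : ℕ) :
    summatory (a * b) N = ∑ n ∈ Finset.Ioc 0 N, a n * summatory b (N / n) :=
  sum_Ioc_mul_eq_sum_sum a b N

lemma HasGrowth.exists_summatory_le (h : HasGrowth a j c) :
    ∃ C : ℝ, 0 ≤ C ∧ ∀ N : ℕ, summatory a N ≤ C * (N * oneAddLog N ^ j) := by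
  obtain ⟨C, hC⟩ := h.bddAbove_range
  refine ⟨max C 0, le_max_right _ _, fun N => ?_⟩
  rcases Nat.eq_zero_or_pos N with rfl | hN
  · simp
  · rw [← div_le_iff₀ (mul_oneAddLog_pow_pos hN j)]
    exact (hC ⟨N, rfl⟩).trans (le_max_left _ _)

lemma HasGrowth.comp_div (h : HasGrowth t j c) {d : ℕ} (hd : 0 < d) :
    Tendsto (fun N : ℕ => summatory t (N / d) / (N * oneAddLog N ^ j)) atTop (𝓝 (c / d)) := by
  have hratio := tendsto_natDiv_div hd
  have hprod := ((h.comp (Nat.tendsto_div_const_atTop hd.ne')).mul hratio).mul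
    ((tendsto_oneAddLog_div (by positivity) hratio).pow j)
  rw [one_pow, mul_one, mul_one_div] at hprod
  refine hprod.congr' ?_
  filter_upwards [eventually_ge_atTop d] with N hN
  have hM : ((N / d : ℕ) : ℝ) ≠ 0 := by exact_mod_cast (Nat.div_pos hN hd).ne'
  have hN' : (N : ℝ) ≠ 0 := by exact_mod_cast (hd.trans_le hN).ne'
  have hlogN := (oneAddLog_pos N).ne'
  have hlogM := (oneAddLog_pos (N / d)).ne'
  simp only [Function.comp_apply, div_pow]
  field_simp

lemma summatory_div_le (hC : 0 ≤ C) (h : ∀ N : ℕ, summatory t N ≤ C * (N * oneAddLog N ^ j))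
    {N d : ℕ} (hN : 0 < N) (hd : 0 < d) :
    summatory t (N / d) / (N * oneAddLog N ^ j) ≤ C / d := by
  rw [div_le_div_iff₀ (mul_oneAddLog_pow_pos hN j) (by exact_mod_cast hd)]
  have hlogM := oneAddLog_pos (N / d)
  have hlogN := oneAddLog_pos N
  calc summatory t (N / d) * d ≤ C * ((N / d : ℕ) * oneAddLog (N / d) ^ j) * d := by
        gcongr
        exact h _
    _ ≤ C * ((N / d : ℕ) * oneAddLog N ^ j) * d := by
        gcongr
        exact oneAddLog_mono (Nat.div_le_self N d)
    _ = C * (((N / d : ℕ) * (d : ℝ)) * oneAddLog N ^ j) := by ring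
    _ ≤ C * (N * oneAddLog N ^ j) := by
        gcongr
        exact_mod_cast Nat.div_mul_le_self N d

lemma summatory_mul_div_eq_tsum (w t : ArithmeticFunction ℝ) (x : ℝ) (N : ℕ) :
    summatory (w * t) N / x = ∑' d : ℕ, w d * (summatory t (N / d) / x) := by
  rw [summatory_mul, Finset.sum_div, tsum_eq_sum (s := Finset.Ioc 0 N)]
  · exact Finset.sum_congr rfl fun d _ => mul_div_assoc _ _ _
  · intro d hd
    rcases Nat.eq_zero_or_pos d with rfl | hd0
    · simp
    · have hlt : N < d := by simpa [hd0] using hd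
      simp [Nat.div_eq_of_lt hlt]

lemma HasGrowth.mul_of_summable (h : HasGrowth t j c) (ht : ∀ n, 0 ≤ t n) (hw : ∀ n, 0 ≤ w n)
    (hs : Summable fun n : ℕ => w n / n) :
    HasGrowth (w * t) j (∑' n : ℕ, w n * (c / n)) := by
  obtain ⟨C, hC, hbound⟩ := h.exists_summatory_le
  simp only [HasGrowth, summatory_mul_div_eq_tsum]
  refine tendsto_tsum_of_dominated_convergence (hs.mul_left C) (fun d => ?_) ?_
  · rcases Nat.eq_zero_or_pos d with rfl | hd
    · simp
    · exact (h.comp_div hd).const_mul _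
  · filter_upwards [eventually_gt_atTop 0] with N hN d
    rcases Nat.eq_zero_or_pos d with rfl | hd
    · simp
    · have hnonneg : 0 ≤ summatory t (N / d) / (N * oneAddLog N ^ j) :=
        div_nonneg (summatory_nonneg ht _) (mul_oneAddLog_pow_pos hN j).le
      rw [Real.norm_of_nonneg (mul_nonneg (hw d) hnonneg)]
      calc w d * (summatory t (N / d) / (N * oneAddLog N ^ j)) ≤ w d * (C / d) :=
            mul_le_mul_of_nonneg_left (summatory_div_le hC hbound hN hd) (hw d)
        _ = C * (w d / d) := by ring

/-- Truncating `w` at `M` gives `c ∑_{d ≤ M} w d / d ≤ C` in the limit `N → ∞`. -/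
lemma HasGrowth.summable_of_mul (ht : HasGrowth t j c) (hwt : HasGrowth (w * t) j C) (hc : 0 < c)
    (ht0 : ∀ n, 0 ≤ t n) (hw0 : ∀ n, 0 ≤ w n) : Summable fun n : ℕ => w n / n := by
  refine summable_of_sum_range_le (c := C / c) (fun n => by have := hw0 n; positivity) fun M => ?_
  rw [le_div_iff₀ hc]
  have hlim := tendsto_finsetSum (Finset.range M) fun d hd =>
    show Tendsto (fun N : ℕ => w d * (summatory t (N / d) / (N * oneAddLog N ^ j))) atTop
      (𝓝 (w d / d * c)) by
    rcases Nat.eq_zero_or_pos d with rfl | hd0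
    · simp
    · simpa only [div_mul_eq_mul_div, mul_div_assoc] using (ht.comp_div hd0).const_mul (w d)
  rw [Finset.sum_mul]
  refine le_of_tendsto_of_tendsto hlim hwt ?_
  filter_upwards [eventually_ge_atTop M] with N hN
  have hterm : ∀ d, 0 ≤ w d * (summatory t (N / d) / (N * oneAddLog N ^ j)) := fun d => by
    have := hw0 d
    have := summatory_nonneg ht0 (N / d)
    have := oneAddLog_pos N
    positivity
  rw [summatory_mul, Finset.sum_div]
  simp only [mul_div_assoc]
  rw [← Finset.sum_erase (Finset.range M) (a := 0) (by simp)]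
  refine Finset.sum_le_sum_of_subset_of_nonneg (fun d hd => ?_) fun d _ _ => hterm d
  simp only [Finset.mem_erase, Finset.mem_range, Finset.mem_Ioc] at hd ⊢
  lia

lemma tendsto_sum_range_div_of_tendsto_div {u v : ℕ → ℝ} {L : ℝ} (hv : ∀ n, 0 ≤ v n)
    (hv' : ∀ᶠ n in atTop, v n ≠ 0)
    (hvsum : Tendsto (fun n => ∑ i ∈ Finset.range n, v i) atTop atTop)
    (h : Tendsto (fun n => u n / v n) atTop (𝓝 L)) :
    Tendsto (fun n => (∑ i ∈ Finset.range n, u i) / ∑ i ∈ Finset.range n, v i) atTop (𝓝 L) := by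
  have hlittle : (fun n => u n - L * v n) =o[atTop] v := by
    rw [Asymptotics.isLittleO_iff_tendsto' (hv'.mono fun n hn h0 => absurd h0 hn)]
    have hsub := h.sub_const L
    rw [sub_self] at hsub
    refine hsub.congr' ?_
    filter_upwards [hv'] with n hn
    rw [sub_div, mul_div_cancel_right₀ _ hn]
  have hlim := (hlittle.sum_range hv hvsum).tendsto_div_nhds_zero.add_const L
  rw [zero_add] at hlim
  refine hlim.congr' ?_
  filter_upwards [hvsum.eventually_ne_atTop 0] with n hn
  rw [Finset.sum_sub_distrib, ← Finset.mul_sum, sub_div, mul_div_cancel_right₀ _ hn,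
    sub_add_cancel]

lemma sum_div_eq_summatory_div_add (b : ArithmeticFunction ℝ) (N : ℕ) :
    ∑ n ∈ Finset.Ioc 0 N, b n / n =
      summatory b N / N + ∑ i ∈ Finset.range N, summatory b i / (i * (i + 1)) := by
  induction N with
  | zero => simp
  | succ N ih =>
    rw [Finset.sum_Ioc_succ_top (Nat.zero_le N), ih, Finset.sum_range_succ, summatory_succ]
    rcases Nat.eq_zero_or_pos N with rfl | hN
    · simp
    · push_cast
      field_simp
      ring

lemma HasGrowth.tendsto_sum_range (h : HasGrowth b j β) :
    Tendsto (fun N : ℕ => (∑ i ∈ Finset.range N, summatory b i / (i * (i + 1))) /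
      (oneAddLog N ^ (j + 1) - 1)) atTop (𝓝 (β / (j + 1))) := by
  set v : ℕ → ℝ := fun i => oneAddLog (i + 1) ^ (j + 1) - oneAddLog i ^ (j + 1)
  have hv_nonneg (i : ℕ) : 0 ≤ v i :=
    sub_nonneg.2 (pow_le_pow_left₀ (oneAddLog_pos _).le (oneAddLog_mono i.le_succ) _)
  have hv_sum (N : ℕ) : ∑ i ∈ Finset.range N, v i = oneAddLog N ^ (j + 1) - 1 := by
    rw [Finset.sum_range_sub fun i => oneAddLog i ^ (j + 1), oneAddLog_zero, one_pow]
  have hv_top : Tendsto (fun N => ∑ i ∈ Finset.range N, v i) atTop atTop := by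
    simp only [hv_sum]
    exact tendsto_atTop_add_const_right _ _
      ((tendsto_pow_atTop j.succ_ne_zero).comp tendsto_oneAddLog_atTop)
  have hv_lim := tendsto_succ_mul_oneAddLog_pow_sub j
  have hj : (j : ℝ) + 1 ≠ 0 := by positivity
  have hv_ne : ∀ᶠ i in atTop, v i ≠ 0 := by
    filter_upwards [hv_lim.eventually_ne hj] with i hi hvi
    exact hi (by rw [show oneAddLog (i + 1) ^ (j + 1) - _ = 0 from hvi, mul_zero, zero_div])
  simp only [← hv_sum]
  refine tendsto_sum_range_div_of_tendsto_div hv_nonneg hv_ne hv_top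
    ((h.div hv_lim hj).congr fun i => ?_)
  have hlog := (oneAddLog_pos i).ne'
  have hi : (i : ℝ) + 1 ≠ 0 := by positivity
  change summatory b i / (i * oneAddLog i ^ j) / ((i + 1) * v i / oneAddLog i ^ j) = _
  field_simp

lemma HasGrowth.tendsto_sum_div (h : HasGrowth b j β) :
    Tendsto (fun N : ℕ => (∑ n ∈ Finset.Ioc 0 N, b n / n) / oneAddLog N ^ (j + 1)) atTop
      (𝓝 (β / (j + 1))) := by
  have hpow : Tendsto (fun N => oneAddLog N ^ (j + 1)) atTop atTop :=
    (tendsto_pow_atTop j.succ_ne_zero).comp tendsto_oneAddLog_atTop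
  have hscale : Tendsto (fun N => (oneAddLog N ^ (j + 1) - 1) / oneAddLog N ^ (j + 1)) atTop
      (𝓝 1) := by
    have hlim := (tendsto_inv_atTop_zero.comp hpow).const_sub 1
    rw [sub_zero] at hlim
    refine hlim.congr fun N => ?_
    rw [Function.comp_apply, sub_div, div_self (pow_pos (oneAddLog_pos N) _).ne', one_div]
  have hlim := (h.div_atTop tendsto_oneAddLog_atTop).add (h.tendsto_sum_range.mul hscale)
  rw [zero_add, mul_one] at hlim
  refine hlim.congr' ?_
  filter_upwards [hpow.eventually_gt_atTop 1] with N hN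
  rw [sum_div_eq_summatory_div_add, add_div, div_mul_div_cancel₀ (sub_pos.2 hN).ne', div_div,
    div_div, mul_assoc, ← pow_succ]

lemma HasGrowth.exists_abs_summatory_sub_le (h : HasGrowth a 0 α) {η : ℝ} (hη : 0 < η) :
    ∃ C : ℝ, ∀ M : ℕ, |summatory a M - α * M| ≤ η * M + C := by
  have hlim : ∀ᶠ M : ℕ in atTop, |summatory a M - α * M| ≤ η * M := by
    filter_upwards [Metric.tendsto_nhds.1 h η hη, eventually_gt_atTop 0] with M hdist hM
    have hM' : (0 : ℝ) < M := by exact_mod_cast hM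
    rw [pow_zero, mul_one, Real.dist_eq, div_sub' hM'.ne', abs_div, abs_of_pos hM',
      div_lt_iff₀ hM', mul_comm (M : ℝ)] at hdist
    exact hdist.le
  obtain ⟨M₀, hM₀⟩ := eventually_atTop.1 hlim
  refine ⟨∑ m ∈ Finset.range M₀, |summatory a m - α * m|, fun M => ?_⟩
  rcases le_or_gt M₀ M with hge | hlt
  · exact (hM₀ M hge).trans (le_add_of_nonneg_right (by positivity))
  · refine le_add_of_nonneg_of_le (by positivity) ?_
    exact Finset.single_le_sum (f := fun m : ℕ => |summatory a m - α * m|)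
      (fun i _ => abs_nonneg _) (Finset.mem_range.2 hlt)

lemma HasGrowth.exists_abs_summatory_natDiv_sub_le (h : HasGrowth a 0 α) {η : ℝ} (hη : 0 < η) :
    ∃ C : ℝ, ∀ N d : ℕ, 0 < d → |summatory a (N / d) - α * (N / d)| ≤ η * (N / d) + C := by
  obtain ⟨C, hC⟩ := h.exists_abs_summatory_sub_le hη
  refine ⟨C + |α|, fun N d hd => ?_⟩
  have hfloor_le : ((N / d : ℕ) : ℝ) ≤ N / d := Nat.cast_div_le
  have hlt_floor : (N : ℝ) / d < (N / d : ℕ) + 1 := by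
    rw [div_lt_iff₀ (by exact_mod_cast hd)]
    exact_mod_cast Nat.lt_mul_of_div_lt (Nat.lt_succ_self _) hd
  have hfrac : |α * (N / d : ℕ) - α * (N / d)| ≤ |α| := by
    rw [← mul_sub, abs_mul]
    exact mul_le_of_le_one_right (abs_nonneg α) (abs_le.2 ⟨by linarith, by linarith⟩)
  calc |summatory a (N / d) - α * (N / d)|
      ≤ |summatory a (N / d) - α * (N / d : ℕ)| + |α * (N / d : ℕ) - α * (N / d)| :=
        abs_sub_le _ _ _
    _ ≤ η * (N / d : ℕ) + C + |α| := add_le_add (hC _) hfrac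
    _ ≤ η * (N / d) + (C + |α|) := by
        have := mul_le_mul_of_nonneg_left hfloor_le hη.le
        linarith

lemma abs_summatory_mul_sub_le (hb : ∀ n, 0 ≤ b n) {η : ℝ}
    (h : ∀ N d : ℕ, 0 < d → |summatory a (N / d) - α * (N / d)| ≤ η * (N / d) + C) (N : ℕ) :
    |summatory (b * a) N - α * N * ∑ n ∈ Finset.Ioc 0 N, b n / n| ≤
      η * N * ∑ n ∈ Finset.Ioc 0 N, b n / n + C * summatory b N := by
  calc |summatory (b * a) N - α * N * ∑ n ∈ Finset.Ioc 0 N, b n / n|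
      = |∑ d ∈ Finset.Ioc 0 N, b d * (summatory a (N / d) - α * (N / d))| := by
        rw [summatory_mul, Finset.mul_sum, ← Finset.sum_sub_distrib]
        exact congrArg _ (Finset.sum_congr rfl fun d _ => by ring)
    _ ≤ ∑ d ∈ Finset.Ioc 0 N, |b d * (summatory a (N / d) - α * (N / d))| :=
        Finset.abs_sum_le_sum_abs _ _
    _ ≤ ∑ d ∈ Finset.Ioc 0 N, b d * (η * (N / d) + C) := by
        refine Finset.sum_le_sum fun d hd => ?_
        rw [abs_mul, abs_of_nonneg (hb d)]
        exact mul_le_mul_of_nonneg_left (h N d (Finset.mem_Ioc.1 hd).1) (hb d)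
    _ = η * N * ∑ n ∈ Finset.Ioc 0 N, b n / n + C * summatory b N := by
        rw [summatory, Finset.mul_sum, Finset.mul_sum, ← Finset.sum_add_distrib]
        exact Finset.sum_congr rfl fun d _ => by ring

lemma HasGrowth.tendsto_summatory_mul_sub (hb : HasGrowth b j β) (ha : HasGrowth a 0 α)
    (hb0 : ∀ n, 0 ≤ b n) :
    Tendsto (fun N : ℕ => (summatory (b * a) N - α * N * ∑ n ∈ Finset.Ioc 0 N, b n / n) /
      (N * oneAddLog N ^ (j + 1))) atTop (𝓝 0) := by
  have hβ : 0 ≤ β / (j + 1) := ge_of_tendsto' hb.tendsto_sum_div fun N =>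
    div_nonneg (Finset.sum_nonneg fun n _ => div_nonneg (hb0 n) n.cast_nonneg)
      (pow_pos (oneAddLog_pos N) _).le
  rw [Metric.tendsto_nhds]
  intro ε hε
  set η : ℝ := ε / (β / (j + 1) + 1)
  obtain ⟨C, hC⟩ := ha.exists_abs_summatory_natDiv_sub_le (show 0 < η by positivity)
  have hbound := (hb.tendsto_sum_div.const_mul η).add
    ((hb.div_atTop tendsto_oneAddLog_atTop).const_mul C)
  have hlt : η * (β / (j + 1)) + C * 0 < ε := by
    rw [mul_zero, add_zero, div_mul_eq_mul_div, div_lt_iff₀ (by positivity)]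
    linarith
  filter_upwards [hbound.eventually (gt_mem_nhds hlt), eventually_gt_atTop 0] with N hN hN0
  have hpos := mul_oneAddLog_pow_pos hN0 (j + 1)
  have hN' : (N : ℝ) ≠ 0 := by positivity
  have hlog := (oneAddLog_pos N).ne'
  rw [Real.dist_0_eq_abs, abs_div, abs_of_pos hpos]
  refine (div_le_div_of_nonneg_right (abs_summatory_mul_sub_le hb0 hC N) hpos.le).trans_lt
    (lt_of_eq_of_lt ?_ hN)
  field_simp
  ring

lemma HasGrowth.mul (hb : HasGrowth b j β) (ha : HasGrowth a 0 α) (hb0 : ∀ n, 0 ≤ b n) :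
    HasGrowth (b * a) (j + 1) (α * (β / (j + 1))) := by
  have hlim := (hb.tendsto_summatory_mul_sub ha hb0).add (hb.tendsto_sum_div.const_mul α)
  rw [zero_add] at hlim
  refine hlim.congr' ?_
  filter_upwards [eventually_gt_atTop 0] with N hN
  have hN' : (N : ℝ) ≠ 0 := by positivity
  have hlog := (oneAddLog_pos N).ne'
  field_simp
  ring

lemma mul_apply_nonneg (ha : ∀ n, 0 ≤ a n) (hb : ∀ n, 0 ≤ b n) (n : ℕ) : 0 ≤ (a * b) n := by
  rw [ArithmeticFunction.mul_apply]
  exact Finset.sum_nonneg fun x _ => mul_nonneg (ha _) (hb _)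

lemma prod_apply_nonneg {ι : Type*} {a : ι → ArithmeticFunction ℝ} (ha : ∀ i n, 0 ≤ a i n)
    (s : Finset ι) (n : ℕ) : 0 ≤ (∏ i ∈ s, a i) n := by
  induction s using Finset.cons_induction generalizing n with
  | empty => rw [Finset.prod_empty, one_apply]; positivity
  | cons i s hi ih => rw [Finset.prod_cons]; exact mul_apply_nonneg (ha i) ih n

lemma exists_hasGrowth_prod {ι : Type*} {a : ι → ArithmeticFunction ℝ} (ha : ∀ i n, 0 ≤ a i n)
    (h : ∀ i, ∃ c > 0, HasGrowth (a i) 0 c) {s : Finset ι} (hs : s.Nonempty) :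
    ∃ c > 0, HasGrowth (∏ i ∈ s, a i) (s.card - 1) c := by
  induction hs using Finset.Nonempty.cons_induction with
  | singleton i => simpa using h i
  | cons i s hi hs ih =>
    obtain ⟨α, hα, hai⟩ := h i
    obtain ⟨β, hβ, has⟩ := ih
    refine ⟨α * (β / ((s.card - 1 : ℕ) + 1)), by positivity, ?_⟩
    rw [Finset.prod_cons, Finset.card_cons, mul_comm, Nat.add_sub_cancel]
    simpa only [Nat.sub_add_cancel hs.card_pos] using has.mul hai (prod_apply_nonneg ha s)

lemma HasGrowth.tendsto_div_log (h : HasGrowth a j c) :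
    Tendsto (fun N : ℕ => summatory a N / (N * Real.log N ^ j)) atTop (𝓝 c) := by
  have hlog : Tendsto (fun N : ℕ => Real.log N) atTop atTop :=
    Real.tendsto_log_atTop.comp tendsto_natCast_atTop_atTop
  have hratio : Tendsto (fun N : ℕ => oneAddLog N / Real.log N) atTop (𝓝 1) := by
    have hlim := (tendsto_inv_atTop_zero.comp hlog).add_const 1
    rw [zero_add] at hlim
    refine hlim.congr' ?_
    filter_upwards [hlog.eventually_ne_atTop 0] with N hN
    rw [oneAddLog, add_div, div_self hN, one_div, Function.comp_apply]
  have hlim := Tendsto.mul h (hratio.pow j)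
  rw [one_pow, mul_one] at hlim
  refine hlim.congr fun N => ?_
  rw [div_pow, ← div_div, div_mul_div_cancel₀ (pow_pos (oneAddLog_pos N) j).ne', div_div]

end Summatory

/-! ### Smooth and coprime parts of an arithmetic function -/

section Parts

/-- The restriction of `a` to `s`, extended by `0`. -/
noncomputable def restrict (a : ArithmeticFunction ℝ) (s : Set ℕ) : ArithmeticFunction ℝ :=
  ⟨s.indicator a, by simp⟩

/-- The restriction of `a` to the positive integers all of whose prime factors divide `m`. -/
noncomputable abbrev smoothPart (a : ArithmeticFunction ℝ) (m : ℕ) : ArithmeticFunction ℝ :=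
  restrict a (Nat.factoredNumbers m.primeFactors)

/-- The restriction of `a` to the integers coprime to `m`. -/
noncomputable abbrev coprimePart (a : ArithmeticFunction ℝ) (m : ℕ) : ArithmeticFunction ℝ :=
  restrict a {n | n.Coprime m}

variable {a : ArithmeticFunction ℝ} {s : Set ℕ} {m n d e : ℕ}

lemma restrict_apply (a : ArithmeticFunction ℝ) (s : Set ℕ) (n : ℕ) :
    restrict a s n = s.indicator a n := rfl

lemma restrict_of_mem (a : ArithmeticFunction ℝ) (hn : n ∈ s) : restrict a s n = a n :=
  Set.indicator_of_mem hn a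

lemma restrict_of_notMem (a : ArithmeticFunction ℝ) (hn : n ∉ s) : restrict a s n = 0 :=
  Set.indicator_of_notMem hn a

lemma restrict_nonneg (ha : ∀ n, 0 ≤ a n) (s : Set ℕ) (n : ℕ) : 0 ≤ restrict a s n :=
  Set.indicator_nonneg (fun n _ => ha n) n

lemma coprimePart_of_coprime (a : ArithmeticFunction ℝ) (h : n.Coprime m) :
    coprimePart a m n = a n :=
  restrict_of_mem a (s := {n | n.Coprime m}) h

lemma coprimePart_of_not_coprime (a : ArithmeticFunction ℝ) (h : ¬ n.Coprime m) :
    coprimePart a m n = 0 :=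
  restrict_of_notMem a (s := {n | n.Coprime m}) h

lemma coprimePart_one_right (a : ArithmeticFunction ℝ) : coprimePart a 1 = a := by
  ext n
  exact coprimePart_of_coprime a (Nat.coprime_one_right n)

lemma coprimePart_mul (a b : ArithmeticFunction ℝ) (m : ℕ) :
    coprimePart (a * b) m = coprimePart a m * coprimePart b m := by
  ext n
  by_cases hn : n.Coprime m
  · rw [coprimePart_of_coprime _ hn, mul_apply, mul_apply]
    refine Finset.sum_congr rfl fun x hx => ?_
    have hx' : x.1 * x.2 = n := (Nat.mem_divisorsAntidiagonal.1 hx).1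
    obtain ⟨h₁, h₂⟩ := Nat.coprime_mul_iff_left.1 (hx' ▸ hn : (x.1 * x.2).Coprime m)
    rw [coprimePart_of_coprime a h₁, coprimePart_of_coprime b h₂]
  · rw [coprimePart_of_not_coprime _ hn, mul_apply]
    refine (Finset.sum_eq_zero fun x hx => ?_).symm
    have hx' : x.1 * x.2 = n := (Nat.mem_divisorsAntidiagonal.1 hx).1
    rcases not_and_or.1 (mt Nat.coprime_mul_iff_left.2 (hx' ▸ hn)) with h₁ | h₂
    · exact mul_eq_zero_of_left (coprimePart_of_not_coprime a h₁) _
    · exact mul_eq_zero_of_right _ (coprimePart_of_not_coprime b h₂)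

lemma coprimePart_one (m : ℕ) : coprimePart 1 m = 1 := by
  ext n
  rcases eq_or_ne n 1 with rfl | hn
  · exact coprimePart_of_coprime 1 (Nat.coprime_one_left m)
  · rw [one_apply_ne hn, restrict_apply, Set.indicator_apply_eq_zero]
    exact fun _ => one_apply_ne hn

lemma coprimePart_prod {ι : Type*} (a : ι → ArithmeticFunction ℝ) (s : Finset ι) (m : ℕ) :
    coprimePart (∏ i ∈ s, a i) m = ∏ i ∈ s, coprimePart (a i) m := by
  induction s using Finset.cons_induction with
  | empty => simpa using coprimePart_one m
  | cons i s hi ih => rw [Finset.prod_cons, Finset.prod_cons, coprimePart_mul, ih]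

lemma coprime_of_mem_factoredNumbers (hd : d ∈ Nat.factoredNumbers m.primeFactors)
    (he : e.Coprime m) : d.Coprime e :=
  Nat.coprime_of_dvd fun _ hp hpd hpe =>
    Nat.not_coprime_of_dvd_of_dvd hp.one_lt hpe
      (Nat.dvd_of_mem_primeFactors (Nat.mem_factoredNumbers'.1 hd _ hp hpd)) he

lemma exists_mem_factoredNumbers_mul_coprime (hm : m ≠ 0) (hn : n ≠ 0) :
    ∃ d ∈ Nat.factoredNumbers m.primeFactors, ∃ e, e.Coprime m ∧ d * e = n := by
  induction n using induction_on_primes with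
  | zero => exact absurd rfl hn
  | one => exact ⟨1, by simp [Nat.mem_factoredNumbers], 1, Nat.coprime_one_left m, one_mul 1⟩
  | prime_mul p n hp ih =>
    obtain ⟨d, hd, e, he, rfl⟩ := ih (right_ne_zero_of_mul hn)
    by_cases hpm : p ∣ m
    · refine ⟨p * d, Nat.mul_mem_factoredNumbers ?_ hd, e, he, mul_assoc _ _ _⟩
      refine Nat.mem_factoredNumbers'.2 fun q hq hqp => ?_
      rw [(Nat.prime_dvd_prime_iff_eq hq hp).1 hqp]
      exact Nat.mem_primeFactors.2 ⟨hp, hpm, hm⟩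
    · exact ⟨d, hd, p * e, Nat.Coprime.mul_left ((hp.coprime_iff_not_dvd).2 hpm) he,
        mul_left_comm _ _ _⟩

lemma smoothPart_mul_coprimePart (ha : a.IsMultiplicative) (hm : m ≠ 0) :
    smoothPart a m * coprimePart a m = a := by
  ext n
  rcases eq_or_ne n 0 with rfl | hn
  · simp
  obtain ⟨d, hd, e, he, rfl⟩ := exists_mem_factoredNumbers_mul_coprime hm hn
  have hd0 : d ≠ 0 := left_ne_zero_of_mul hn
  rw [mul_apply, Finset.sum_eq_single_of_mem (d, e) (Nat.mem_divisorsAntidiagonal.2 ⟨rfl, hn⟩)]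
  · rw [restrict_of_mem a hd, coprimePart_of_coprime a he,
      ha.map_mul_of_coprime (coprime_of_mem_factoredNumbers hd he)]
  · rintro ⟨d', e'⟩ hmem hne
    by_cases hd' : d' ∈ Nat.factoredNumbers m.primeFactors
    swap; · rw [restrict_of_notMem a hd', zero_mul]
    refine mul_eq_zero_of_right _ (coprimePart_of_not_coprime a fun he' => hne ?_)
    have heq : d' * e' = d * e := (Nat.mem_divisorsAntidiagonal.1 hmem).1
    have hdvd : d' ∣ d :=
      (coprime_of_mem_factoredNumbers hd' he).dvd_of_dvd_mul_right (heq ▸ dvd_mul_right d' e')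
    have hdvd' : d ∣ d' :=
      (coprime_of_mem_factoredNumbers hd he').dvd_of_dvd_mul_right (heq ▸ dvd_mul_right d e)
    obtain rfl := Nat.dvd_antisymm hdvd hdvd'
    rw [Nat.eq_of_mul_eq_mul_left (Nat.pos_of_ne_zero hd0) heq]

end Parts

/-! ### Counting ideals of finite index -/

/-- The arithmetic function `n ↦ a_n(A)` counting the ideals of index `n`. Its value at `0` is `0`,
although `Nat.card` assigns the junk index `0` to the ideals of infinite index. -/
noncomputable def idealCount (A : Type*) [CommRing A] : ArithmeticFunction ℝ :=
  ⟨fun n => if n = 0 then 0 else (Nat.card {I : Ideal A // Nat.card (A ⧸ I) = n} : ℝ), by simp⟩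

section IdealCount

variable {A B : Type*} [CommRing A] [CommRing B] {I J P Q : Ideal A} {m n : ℕ}

lemma idealCount_apply (A : Type*) [CommRing A] (hn : n ≠ 0) :
    idealCount A n = (Nat.card {I : Ideal A // Nat.card (A ⧸ I) = n} : ℝ) := by
  simp [idealCount, hn]

lemma idealCount_nonneg (A : Type*) [CommRing A] (n : ℕ) : 0 ≤ idealCount A n := by
  rcases eq_or_ne n 0 with rfl | hn
  · simp
  · rw [idealCount_apply A hn]
    positivity

lemma natCast_mem_of_card_quotient_eq (hI : Nat.card (A ⧸ I) = n) : (n : A) ∈ I := by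
  rw [← Ideal.Quotient.eq_zero_iff_mem, map_natCast, ← nsmul_one, ← hI]
  exact card_nsmul_eq_zero'

lemma isCoprime_of_le (h : IsCoprime P Q) (hP : P ≤ I) (hQ : Q ≤ J) : IsCoprime I J :=
  Ideal.isCoprime_iff_codisjoint.2 ((Ideal.isCoprime_iff_codisjoint.1 h).mono hP hQ)

lemma isCoprime_span_natCast (h : m.Coprime n) :
    IsCoprime (Ideal.span {(m : A)}) (Ideal.span {(n : A)}) :=
  (Ideal.isCoprime_span_singleton_iff _ _).2 (Nat.Coprime.cast h)

lemma isCoprime_span_natCast_of_mem (hI : (n : A) ∈ I) (h : n.Coprime m) :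
    IsCoprime I (Ideal.span {(m : A)}) :=
  isCoprime_of_le (isCoprime_span_natCast h) ((Ideal.span_singleton_le_iff_mem I).2 hI) le_rfl

lemma coprime_card_quotient_iff (hI : Nat.card (A ⧸ I) ≠ 0) :
    (Nat.card (A ⧸ I)).Coprime m ↔ IsCoprime I (Ideal.span {(m : A)}) := by
  refine ⟨isCoprime_span_natCast_of_mem (natCast_mem_of_card_quotient_eq rfl),
    fun h => Nat.coprime_of_dvd fun p hp hpI hpm => ?_⟩
  have : Finite (A ⧸ I) := Nat.finite_of_card_ne_zero hI
  have : Fact p.Prime := ⟨hp⟩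
  obtain ⟨x, hx⟩ := exists_prime_addOrderOf_dvd_card' p hpI
  have hunit : IsUnit (m : A ⧸ I) := by
    obtain ⟨i, hi, j, hj, hij⟩ := Ideal.isCoprime_iff_exists.1 h
    obtain ⟨r, rfl⟩ := Ideal.mem_span_singleton'.1 hj
    refine IsUnit.of_mul_eq_one (Ideal.Quotient.mk I r) ?_
    rw [← map_natCast (Ideal.Quotient.mk I), ← map_mul, ← map_one (Ideal.Quotient.mk I),
      Ideal.Quotient.eq, ← hij, mul_comm]
    simpa using hi
  have hmx : (m : A ⧸ I) * x = 0 := by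
    rw [← nsmul_eq_mul]
    exact addOrderOf_dvd_iff_nsmul_eq_zero.1 (hx ▸ hpm)
  rw [hunit.mul_right_eq_zero.1 hmx, addOrderOf_zero] at hx
  exact hp.one_lt.ne hx

lemma sup_inf_sup_eq_of_isCoprime (hPQ : IsCoprime P Q) (h : P * Q ≤ I) :
    (I ⊔ P) ⊓ (I ⊔ Q) = I := by
  refine le_antisymm ?_ (le_inf le_sup_left le_sup_left)
  rw [← Ideal.mul_eq_inf_of_isCoprime (isCoprime_of_le hPQ le_sup_right le_sup_right),
    Ideal.sup_mul, Ideal.mul_sup P]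
  exact sup_le Ideal.mul_le_left (sup_le Ideal.mul_le_right h)

lemma inf_sup_eq_of_isCoprime (hPI : P ≤ I) (h : IsCoprime J P) : I ⊓ J ⊔ P = I := by
  refine le_antisymm (sup_le inf_le_left hPI) ?_
  calc I = I * (J ⊔ P) := by rw [h.sup_eq, Ideal.mul_top]
    _ = I * J ⊔ I * P := Ideal.mul_sup _ _ _
    _ ≤ I ⊓ J ⊔ P := sup_le_sup Ideal.mul_le_inf Ideal.mul_le_right

lemma card_quotient_inf (h : IsCoprime I J) :
    Nat.card (A ⧸ (I ⊓ J)) = Nat.card (A ⧸ I) * Nat.card (A ⧸ J) := by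
  rw [← Nat.card_prod]
  exact Nat.card_congr (Ideal.quotientInfEquivQuotientProd I J h).toEquiv

lemma card_quotient_sup_span_natCast (hmn : m.Coprime n) (hm : m ≠ 0) (hn : n ≠ 0)
    (hI : Nat.card (A ⧸ I) = m * n) :
    Nat.card (A ⧸ (I ⊔ Ideal.span {(m : A)})) = m ∧
      Nat.card (A ⧸ (I ⊔ Ideal.span {(n : A)})) = n := by
  have hcop : IsCoprime (Ideal.span {(m : A)}) (Ideal.span {(n : A)}) :=
    isCoprime_span_natCast hmn
  have hmul : Nat.card (A ⧸ (I ⊔ Ideal.span {(m : A)})) *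
      Nat.card (A ⧸ (I ⊔ Ideal.span {(n : A)})) = m * n := by
    rw [← card_quotient_inf (isCoprime_of_le hcop le_sup_right le_sup_right),
      sup_inf_sup_eq_of_isCoprime hcop, hI]
    rw [Ideal.span_singleton_mul_span_singleton, Ideal.span_singleton_le_iff_mem, ← Nat.cast_mul]
    exact natCast_mem_of_card_quotient_eq hI
  have hne := hmul.trans_ne (mul_ne_zero hm hn)
  have hm' := (coprime_card_quotient_iff (left_ne_zero_of_mul hne)).2
    (isCoprime_of_le hcop le_sup_right le_rfl)
  have hn' := (coprime_card_quotient_iff (right_ne_zero_of_mul hne)).2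
    (isCoprime_of_le hcop.symm le_sup_right le_rfl)
  exact ⟨Nat.dvd_antisymm (hm'.dvd_of_dvd_mul_right (Dvd.intro _ hmul))
      (hn'.symm.dvd_of_dvd_mul_right (Dvd.intro _ hmul.symm)),
    Nat.dvd_antisymm (hn'.dvd_of_dvd_mul_left (Dvd.intro_left _ hmul))
      (hm'.symm.dvd_of_dvd_mul_left (Dvd.intro_left _ hmul.symm))⟩

/-- The Chinese remainder theorem: for coprime `m` and `n`, an ideal of index `m * n` is the
intersection of a unique pair of ideals of index `m` and `n`. -/
noncomputable def idealsOfCoprimeIndexEquiv (hmn : m.Coprime n) (hm : m ≠ 0) (hn : n ≠ 0) :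
    {I : Ideal A // Nat.card (A ⧸ I) = m * n} ≃
      {I : Ideal A // Nat.card (A ⧸ I) = m} × {I : Ideal A // Nat.card (A ⧸ I) = n} where
  toFun I := (⟨_, (card_quotient_sup_span_natCast hmn hm hn I.2).1⟩,
    ⟨_, (card_quotient_sup_span_natCast hmn hm hn I.2).2⟩)
  invFun K := ⟨K.1.1 ⊓ K.2.1, by
    have hK₁ : (m : A) ∈ K.1.1 := natCast_mem_of_card_quotient_eq K.1.2
    have hK₂ : (n : A) ∈ K.2.1 := natCast_mem_of_card_quotient_eq K.2.2
    rw [card_quotient_inf (isCoprime_of_le (isCoprime_span_natCast hmn)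
      ((Ideal.span_singleton_le_iff_mem _).2 hK₁) ((Ideal.span_singleton_le_iff_mem _).2 hK₂)),
      K.1.2, K.2.2]⟩
  left_inv I := Subtype.ext (sup_inf_sup_eq_of_isCoprime (isCoprime_span_natCast hmn) (by
    rw [Ideal.span_singleton_mul_span_singleton, Ideal.span_singleton_le_iff_mem, ← Nat.cast_mul]
    exact natCast_mem_of_card_quotient_eq I.2))
  right_inv K := by
    have hK₁ : (m : A) ∈ K.1.1 := natCast_mem_of_card_quotient_eq K.1.2
    have hK₂ : (n : A) ∈ K.2.1 := natCast_mem_of_card_quotient_eq K.2.2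
    refine Prod.ext (Subtype.ext ?_) (Subtype.ext ?_)
    · exact inf_sup_eq_of_isCoprime ((Ideal.span_singleton_le_iff_mem _).2 hK₁)
        (isCoprime_span_natCast_of_mem hK₂ hmn.symm)
    · change K.1.1 ⊓ K.2.1 ⊔ _ = K.2.1
      rw [inf_comm]
      exact inf_sup_eq_of_isCoprime ((Ideal.span_singleton_le_iff_mem _).2 hK₂)
        (isCoprime_span_natCast_of_mem hK₁ hmn)

lemma card_quotient_eq_one_iff : Nat.card (A ⧸ I) = 1 ↔ I = ⊤ := by
  rw [← Ideal.Quotient.subsingleton_iff, Nat.card_eq_one_iff_unique]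
  exact and_iff_left ⟨0⟩

lemma idealCount_one (A : Type*) [CommRing A] : idealCount A 1 = 1 := by
  simp [idealCount_apply A one_ne_zero, card_quotient_eq_one_iff]

lemma idealCount_isMultiplicative (A : Type*) [CommRing A] :
    (idealCount A).IsMultiplicative := by
  refine IsMultiplicative.iff_ne_zero.2 ⟨idealCount_one A, fun {m n} hm hn hmn => ?_⟩
  rw [idealCount_apply A (mul_ne_zero hm hn), idealCount_apply A hm, idealCount_apply A hn,
    Nat.card_congr (idealsOfCoprimeIndexEquiv hmn hm hn), Nat.card_prod, Nat.cast_mul]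

lemma card_quotient_comap (e : A ≃+* B) (J : Ideal B) :
    Nat.card (A ⧸ J.comap e) = Nat.card (B ⧸ J) :=
  Nat.card_congr (Ideal.quotientEquiv _ J e
    (Ideal.map_comap_of_surjective e e.surjective J).symm).toEquiv

lemma idealCount_congr (e : A ≃+* B) : idealCount A = idealCount B := by
  ext n
  rcases eq_or_ne n 0 with rfl | hn
  · simp
  rw [idealCount_apply A hn, idealCount_apply B hn]
  exact congrArg _ (Nat.card_congr (e.symm.idealComapOrderIso.toEquiv.subtypeEquiv fun I => by
    change _ ↔ Nat.card (B ⧸ I.comap e.symm) = n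
    rw [card_quotient_comap]))

lemma idealCount_of_subsingleton [Subsingleton A] : idealCount A = 1 := by
  ext n
  rcases eq_or_ne n 1 with rfl | hn
  · rw [idealCount_one, one_one]
  rw [one_apply_ne hn]
  rcases eq_or_ne n 0 with rfl | hn0
  · simp
  have : IsEmpty {I : Ideal A // Nat.card (A ⧸ I) = n} :=
    ⟨fun I => hn (I.2.symm.trans (card_quotient_eq_one_iff.2 (Subsingleton.elim _ _)))⟩
  rw [idealCount_apply A hn0, Nat.card_of_isEmpty, Nat.cast_zero]

lemma finite_quotient_span_natCast (A : Type*) [CommRing A] [Module.Finite ℤ A] (hn : n ≠ 0) :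
    Finite (A ⧸ Ideal.span {(n : A)}) := by
  have hfinite : Module.Finite ℤ (A ⧸ Ideal.span {(n : A)}) :=
    Module.Finite.of_surjective (Ideal.Quotient.mkₐ ℤ _).toLinearMap
      (Ideal.Quotient.mkₐ_surjective ℤ _)
  refine Module.finite_of_fg_torsion _ fun x => ⟨⟨(n : ℤ),
    mem_nonZeroDivisors_of_ne_zero (Nat.cast_ne_zero.2 hn)⟩, ?_⟩
  have hzero : (n : A ⧸ Ideal.span {(n : A)}) = 0 := by
    rw [← map_natCast (Ideal.Quotient.mk _), Ideal.Quotient.eq_zero_iff_mem]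
    exact Ideal.mem_span_singleton_self _
  change (n : ℤ) • x = 0
  rw [natCast_zsmul, nsmul_eq_mul, hzero, zero_mul]

lemma finite_ideals_of_index [Module.Finite ℤ A] (hn : n ≠ 0) :
    Finite {I : Ideal A // Nat.card (A ⧸ I) = n} := by
  have := finite_quotient_span_natCast A hn
  have : Finite (Ideal (A ⧸ Ideal.span {(n : A)})) :=
    Finite.of_injective (fun I => (I : Set (A ⧸ Ideal.span {(n : A)}))) SetLike.coe_injective
  have hle (I : {I : Ideal A // Nat.card (A ⧸ I) = n}) : Ideal.span {(n : A)} ≤ I.1 :=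
    (Ideal.span_singleton_le_iff_mem _).2 (natCast_mem_of_card_quotient_eq I.2)
  refine Finite.of_injective (fun I => I.1.map (Ideal.Quotient.mk (Ideal.span {(n : A)})))
    fun I J h => Subtype.ext ?_
  rw [← Ideal.comap_map_mk (hle I), ← Ideal.comap_map_mk (hle J)]
  exact congrArg _ h

lemma card_subtype_mul_eq {α β : Type*} {f : α → ℕ} {g : β → ℕ}
    (hf : ∀ n ≠ 0, Finite {x // f x = n}) (hg : ∀ n ≠ 0, Finite {y // g y = n}) (hn : n ≠ 0) :
    Nat.card {x : α × β // f x.1 * g x.2 = n} =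
      ∑ d ∈ n.divisorsAntidiagonal, Nat.card {x // f x = d.1} * Nat.card {y // g y = d.2} := by
  let fiberEquiv (d : ℕ × ℕ) :
      {x : α × β // (f x.1, g x.2) = d} ≃ {x // f x = d.1} × {y // g y = d.2} :=
    (Equiv.subtypeEquivRight fun x => Prod.ext_iff).trans
      (Equiv.subtypeProdEquivProd (p := fun x => f x = d.1) (q := fun y => g y = d.2))
  have hfinite (d : n.divisorsAntidiagonal) : Finite {x : α × β // (f x.1, g x.2) = d} := by
    have := hf _ (Nat.left_ne_zero_of_mem_divisorsAntidiagonal d.2)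
    have := hg _ (Nat.right_ne_zero_of_mem_divisorsAntidiagonal d.2)
    exact Finite.of_equiv _ (fiberEquiv d).symm
  rw [← Nat.card_congr (Equiv.sigmaSubtypeFiberEquivSubtype (fun x : α × β => (f x.1, g x.2))
    (p := fun x => f x.1 * g x.2 = n) (q := fun d => d ∈ n.divisorsAntidiagonal)
    (fun x => by simp [hn])), Nat.card_sigma, ← Finset.sum_coe_sort n.divisorsAntidiagonal]
  exact Finset.sum_congr rfl fun d _ => (Nat.card_congr (fiberEquiv d)).trans (Nat.card_prod _ _)

lemma card_quotient_prod (I : Ideal A) (J : Ideal B) :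
    Nat.card ((A × B) ⧸ I.prod J) = Nat.card (A ⧸ I) * Nat.card (B ⧸ J) :=
  AddSubgroup.index_prod (Submodule.toAddSubgroup I) (Submodule.toAddSubgroup J)

lemma idealCount_prod (A B : Type*) [CommRing A] [CommRing B] [Module.Finite ℤ A]
    [Module.Finite ℤ B] : idealCount (A × B) = idealCount A * idealCount B := by
  ext n
  rcases eq_or_ne n 0 with rfl | hn
  · simp
  have hequiv : {I : Ideal (A × B) // Nat.card ((A × B) ⧸ I) = n} ≃
      {K : Ideal A × Ideal B // Nat.card (A ⧸ K.1) * Nat.card (B ⧸ K.2) = n} :=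
    (Ideal.idealProdEquiv.symm.toEquiv.subtypeEquiv fun K => by
      change _ ↔ Nat.card ((A × B) ⧸ K.1.prod K.2) = n
      rw [card_quotient_prod]).symm
  rw [idealCount_apply _ hn, Nat.card_congr hequiv,
    card_subtype_mul_eq (fun _ => finite_ideals_of_index) (fun _ => finite_ideals_of_index) hn,
    mul_apply, Nat.cast_sum]
  refine Finset.sum_congr rfl fun d hd => ?_
  rw [Nat.cast_mul, idealCount_apply A (Nat.left_ne_zero_of_mem_divisorsAntidiagonal hd),
    idealCount_apply B (Nat.right_ne_zero_of_mem_divisorsAntidiagonal hd)]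

lemma idealCount_pi {ι : Type*} [Fintype ι] (A : ι → Type*) [∀ i, CommRing (A i)]
    [∀ i, Module.Finite ℤ (A i)] : idealCount (∀ i, A i) = ∏ i, idealCount (A i) := by
  refine Finite.induction_empty_option (P := fun ι => ∀ [Fintype ι] (A : ι → Type _)
    [∀ i, CommRing (A i)] [∀ i, Module.Finite ℤ (A i)],
    idealCount (∀ i, A i) = ∏ i, idealCount (A i)) ?_ ?_ ?_ ι A
  · intro α β e ih _ A _ _
    have := Fintype.ofEquiv β e.symm
    rw [← idealCount_congr (RingEquiv.piCongrLeft A e), ih fun i => A (e i)]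
    exact e.prod_comp fun i => idealCount (A i)
  · intro _ A _ _
    rw [idealCount_of_subsingleton, Finset.univ_eq_empty, Finset.prod_empty]
  · intro α _ ih _ A _ _
    rw [idealCount_congr RingEquiv.piOptionEquivProd, idealCount_prod, ih]
    convert (Fintype.prod_option fun i => idealCount (A i)).symm

end IdealCount

/-! ### Subrings of finite index -/

section FiberSums

variable {α β : Type*} {f : α → β} {g : β → ℝ}

lemma summable_comp_iff (hg : ∀ b, 0 ≤ g b) (hf : ∀ b, g b ≠ 0 → Finite {x // f x = b}) :
    (Summable fun x => g (f x)) ↔ Summable fun b => Nat.card {x // f x = b} * g b := by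
  have hfiber (b : β) :
      HasSum (fun x : {x // f x = b} => g (f x)) (Nat.card {x // f x = b} * g b) := by
    have hconst : (fun x : {x // f x = b} => g (f x)) = fun _ => g b :=
      funext fun x => congrArg g x.2
    rw [hconst]
    rcases eq_or_ne (g b) 0 with hb | hb
    · simp [hb]
    · have := hf b hb
      have := Fintype.ofFinite {x // f x = b}
      simpa using hasSum_fintype fun _ : {x // f x = b} => g b
  rw [← (Equiv.sigmaFiberEquiv f).summable_iff]
  refine (summable_sigma_of_nonneg fun _ => hg _).trans ?_
  exact (and_iff_right fun b => (hfiber b).summable).trans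
    (summable_congr fun b => (hfiber b).tsum_eq)

lemma summable_comp_of_card_fiber_le (hg : ∀ b, 0 ≤ g b) {C : ℕ}
    (hf : ∀ b, g b ≠ 0 → Finite {x // f x = b} ∧ Nat.card {x // f x = b} ≤ C)
    (h : Summable g) : Summable fun x => g (f x) := by
  refine (summable_comp_iff hg fun b hb => (hf b hb).1).2
    ((h.mul_left (C : ℝ)).of_nonneg_of_le (fun b => mul_nonneg (Nat.cast_nonneg _) (hg b))
      fun b => ?_)
  rcases eq_or_ne (g b) 0 with hb | hb
  · simp [hb]
  · exact mul_le_mul_of_nonneg_right (by exact_mod_cast (hf b hb).2) (hg b)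

end FiberSums

section AddSubgroup

variable {G : Type*} [AddCommGroup G] {H K : AddSubgroup G}

lemma card_addSubgroup_le (G : Type*) [AddGroup G] [Finite G] :
    Nat.card (AddSubgroup G) ≤ 2 ^ Nat.card G := by
  have := Fintype.ofFinite G
  calc Nat.card (AddSubgroup G) ≤ Nat.card (Set G) :=
        Nat.card_le_card_of_injective _ SetLike.coe_injective
    _ = 2 ^ Nat.card G := by simp

lemma finite_Icc_and_card_Icc_le (h : K.relIndex H ≠ 0) :
    Finite (Set.Icc K H) ∧ Nat.card (Set.Icc K H) ≤ 2 ^ K.relIndex H := by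
  have : Finite (H ⧸ K.addSubgroupOf H) := Nat.finite_of_card_ne_zero h
  let image : Set.Icc K H → AddSubgroup (H ⧸ K.addSubgroupOf H) := fun L =>
    (L.1.addSubgroupOf H).map (QuotientAddGroup.mk' _)
  have hsup (L : Set.Icc K H) :
      L.1.addSubgroupOf H ⊔ K.addSubgroupOf H = L.1.addSubgroupOf H :=
    sup_eq_left.2 (AddSubgroup.comap_mono L.2.1)
  have himage : Function.Injective image := fun L M hLM => by
    have hcomap := congrArg (AddSubgroup.comap (QuotientAddGroup.mk' _)) hLM
    simp only [image, AddSubgroup.comap_map_eq, QuotientAddGroup.ker_mk'] at hcomap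
    rw [hsup, hsup, AddSubgroup.addSubgroupOf_inj, inf_eq_left.2 L.2.2,
      inf_eq_left.2 M.2.2] at hcomap
    exact Subtype.ext hcomap
  exact ⟨Finite.of_injective image himage,
    (Nat.card_le_card_of_injective image himage).trans (card_addSubgroup_le _)⟩

lemma relIndex_map_eq_index_range {f : G →+ G} (hf : Function.Injective f) (hH : H.index ≠ 0)
    (hle : H.map f ≤ H) : (H.map f).relIndex H = f.range.index := by
  refine Nat.eq_of_mul_eq_mul_right (Nat.pos_of_ne_zero hH) ?_
  calc (H.map f).relIndex H * H.index = (H.map f).index := AddSubgroup.relIndex_mul_index hle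
    _ = (H.map f).relIndex f.range * f.range.index :=
        (AddSubgroup.relIndex_mul_index (AddSubgroup.map_le_range f H)).symm
    _ = f.range.index * H.index := by
        rw [AddMonoidHom.range_eq_map, AddSubgroup.relIndex_map_map_of_injective _ _ hf,
          AddSubgroup.relIndex_top_right, mul_comm]

end AddSubgroup

section Transfer

variable {R O : Type*} [CommRing R] [CommRing O] {φ : R →+* O} {m n : ℕ}

lemma mem_of_natCast_mul_mem {A : Type*} [CommRing A] {I : Ideal A} (h : n.Coprime m)
    (hn : (n : A) ∈ I) {x : A} (hx : (m : A) * x ∈ I) : x ∈ I := by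
  obtain ⟨u, v, huv⟩ : IsCoprime (n : A) m := Nat.Coprime.cast h
  rw [show x = u * x * n + v * (m * x) by linear_combination -x * huv]
  exact I.add_mem (I.mul_mem_left _ hn) (I.mul_mem_left _ hx)

lemma card_quotient_comap_of_coprime (hφ : ∀ y : O, ∃ x, φ x = m * y) (h : n.Coprime m)
    {J : Ideal O} (hJ : (n : O) ∈ J) : Nat.card (R ⧸ J.comap φ) = Nat.card (O ⧸ J) := by
  refine Nat.card_congr (Equiv.ofBijective (Ideal.quotientMap J φ le_rfl)
    ⟨Ideal.quotientMap_injective, fun y => ?_⟩)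
  obtain ⟨y, rfl⟩ := Ideal.Quotient.mk_surjective y
  obtain ⟨u, v, huv⟩ : IsCoprime (n : O) m := Nat.Coprime.cast h
  obtain ⟨x, hx⟩ := hφ (v * y)
  refine ⟨Ideal.Quotient.mk _ x, ?_⟩
  rw [Ideal.quotientMap_mk, Ideal.Quotient.eq, hx,
    show m * (v * y) - y = -(u * y) * n by linear_combination y * huv]
  exact J.mul_mem_left _ hJ

lemma exists_mem_map_eq_mul (hφ : ∀ y : O, ∃ x, φ x = m * y) {I : Ideal R} {y : O}
    (hy : y ∈ I.map φ) : ∃ x ∈ I, φ x = m * y := by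
  induction hy using Submodule.closure_induction with
  | zero => exact ⟨0, I.zero_mem, by simp⟩
  | add y y' _ _ hy hy' =>
    obtain ⟨x, hx, hxy⟩ := hy
    obtain ⟨x', hx', hxy'⟩ := hy'
    exact ⟨x + x', I.add_mem hx hx', by rw [map_add, hxy, hxy', mul_add]⟩
  | smul_mem a y hy =>
    obtain ⟨x, hx, rfl⟩ := hy
    obtain ⟨r, hr⟩ := hφ a
    exact ⟨r * x, I.mul_mem_left _ hx, by rw [map_mul, hr, smul_eq_mul, mul_assoc]⟩

lemma comap_map_eq_of_coprime (hinj : Function.Injective φ) (hφ : ∀ y : O, ∃ x, φ x = m * y)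
    (h : n.Coprime m) {I : Ideal R} (hI : (n : R) ∈ I) : (I.map φ).comap φ = I := by
  refine le_antisymm (fun x hx => mem_of_natCast_mul_mem h hI ?_) Ideal.le_comap_map
  obtain ⟨x', hx', hxx'⟩ := exists_mem_map_eq_mul hφ hx
  rwa [show (m : R) * x = x' from hinj (by rw [hxx', map_mul, map_natCast])]

lemma map_comap_eq_of_coprime (hφ : ∀ y : O, ∃ x, φ x = m * y) (h : n.Coprime m) {J : Ideal O}
    (hJ : (n : O) ∈ J) : (J.comap φ).map φ = J := by
  refine le_antisymm Ideal.map_comap_le fun y hy => mem_of_natCast_mul_mem h ?_ ?_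
  · rw [← map_natCast φ n]
    exact Ideal.mem_map_of_mem φ (by rwa [Ideal.mem_comap, map_natCast])
  · obtain ⟨x, hx⟩ := hφ y
    rw [← hx]
    exact Ideal.mem_map_of_mem φ (by rw [Ideal.mem_comap, hx]; exact J.mul_mem_left _ hy)

/-- Extension and contraction of ideals along `φ`, in the indices coprime to a number `m` with
`m O ⊆ φ(R)`. -/
noncomputable def idealsOfIndexCoprimeToConductorEquiv (hinj : Function.Injective φ)
    (hφ : ∀ y : O, ∃ x, φ x = m * y) (h : n.Coprime m) :
    {I : Ideal R // Nat.card (R ⧸ I) = n} ≃ {J : Ideal O // Nat.card (O ⧸ J) = n} where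
  toFun I := ⟨I.1.map φ, by
    have hI : (n : R) ∈ I.1 := natCast_mem_of_card_quotient_eq I.2
    rw [← card_quotient_comap_of_coprime hφ h (by simpa using Ideal.mem_map_of_mem φ hI),
      comap_map_eq_of_coprime hinj hφ h hI, I.2]⟩
  invFun J := ⟨J.1.comap φ, by
    rw [card_quotient_comap_of_coprime hφ h (natCast_mem_of_card_quotient_eq J.2), J.2]⟩
  left_inv I :=
    Subtype.ext (comap_map_eq_of_coprime hinj hφ h (natCast_mem_of_card_quotient_eq I.2))
  right_inv J := Subtype.ext (map_comap_eq_of_coprime hφ h (natCast_mem_of_card_quotient_eq J.2))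

lemma coprimePart_idealCount_eq (hinj : Function.Injective φ)
    (hφ : ∀ y : O, ∃ x, φ x = m * y) :
    coprimePart (idealCount R) m = coprimePart (idealCount O) m := by
  ext n
  by_cases h : n.Coprime m
  · rw [coprimePart_of_coprime _ h, coprimePart_of_coprime _ h]
    rcases eq_or_ne n 0 with rfl | hn
    · simp
    · rw [idealCount_apply R hn, idealCount_apply O hn,
        Nat.card_congr (idealsOfIndexCoprimeToConductorEquiv hinj hφ h)]
  · rw [coprimePart_of_not_coprime _ h, coprimePart_of_not_coprime _ h]

lemma exists_map_eq_index_mul (φ : R →+* O) (y : O) :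
    ∃ x, φ x = φ.toAddMonoidHom.range.index * y := by
  simpa using φ.toAddMonoidHom.range.nsmul_index_mem y

lemma card_quotient_map_dvd (hinj : Function.Injective φ) (I : Ideal R) :
    Nat.card (O ⧸ I.map φ) ∣ Nat.card (R ⧸ I) * φ.toAddMonoidHom.range.index := by
  set H : AddSubgroup R := Submodule.toAddSubgroup I
  have hrel : (H.map φ.toAddMonoidHom).relIndex φ.toAddMonoidHom.range = H.index := by
    rw [AddMonoidHom.range_eq_map, AddSubgroup.relIndex_map_map_of_injective _ _ hinj,
      AddSubgroup.relIndex_top_right]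
  change (Submodule.toAddSubgroup (I.map φ)).index ∣ H.index * _
  rw [← hrel, AddSubgroup.relIndex_mul_index (AddSubgroup.map_le_range _ _)]
  refine AddSubgroup.index_dvd_of_le ?_
  rintro _ ⟨x, hx, rfl⟩
  exact Ideal.mem_map_of_mem φ hx

lemma index_range_nsmul_ne_zero (A : Type*) [CommRing A] [Module.Finite ℤ A] (hm : m ≠ 0) :
    (nsmulAddMonoidHom m : A →+ A).range.index ≠ 0 := by
  have : Finite (A ⧸ Ideal.span {(m : A)}) := finite_quotient_span_natCast A hm
  have hspan : (Submodule.toAddSubgroup (Ideal.span {(m : A)})).index ≠ 0 :=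
    (Nat.card_pos (α := A ⧸ Ideal.span {(m : A)})).ne'
  refine ne_zero_of_dvd_ne_zero hspan (AddSubgroup.index_dvd_of_le fun y hy => ?_)
  obtain ⟨x, rfl⟩ := Ideal.mem_span_singleton.1 hy
  exact ⟨x, nsmul_eq_mul m x⟩

/-- For `J = I O` one has `m J ⊆ φ(I) ⊆ J`, and `[J : m J] = [O : m O]` does not depend on `J`. -/
lemma exists_card_fiber_map_le [Module.Finite ℤ O] [IsAddTorsionFree O] (hm : m ≠ 0)
    (hinj : Function.Injective φ) (hφ : ∀ y : O, ∃ x, φ x = m * y) :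
    ∃ C : ℕ, ∀ J : Ideal O, Nat.card (O ⧸ J) ≠ 0 →
      Finite {I : Ideal R // I.map φ = J} ∧ Nat.card {I : Ideal R // I.map φ = J} ≤ C := by
  set mulm : O →+ O := nsmulAddMonoidHom m
  refine ⟨2 ^ mulm.range.index, fun J hJ => ?_⟩
  set H : AddSubgroup O := Submodule.toAddSubgroup J
  have hle : H.map mulm ≤ H := by
    rintro _ ⟨y, hy, rfl⟩
    exact H.nsmul_mem hy m
  have hrel : (H.map mulm).relIndex H = mulm.range.index :=
    relIndex_map_eq_index_range (nsmul_right_injective hm) hJ hle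
  obtain ⟨hfinite, hcard⟩ :=
    finite_Icc_and_card_Icc_le (hrel.trans_ne (index_range_nsmul_ne_zero O hm))
  let image : {I : Ideal R // I.map φ = J} → Set.Icc (H.map mulm) H := fun I =>
    ⟨(Submodule.toAddSubgroup I.1).map φ.toAddMonoidHom, by
      rintro _ ⟨y, hy, rfl⟩
      obtain ⟨x, hx, hxy⟩ := exists_mem_map_eq_mul hφ (I.2.symm ▸ hy : y ∈ I.1.map φ)
      exact ⟨x, hx, hxy.trans (nsmul_eq_mul m y).symm⟩, by
      rintro _ ⟨x, hx, rfl⟩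
      exact I.2.le (Ideal.mem_map_of_mem φ hx)⟩
  have himage : Function.Injective image := fun I I' h => Subtype.ext
    (Submodule.toAddSubgroup_injective (AddSubgroup.map_injective hinj (congrArg Subtype.val h)))
  exact ⟨Finite.of_injective image himage,
    hrel ▸ (Nat.card_le_card_of_injective image himage).trans hcard⟩

/-- The weight `1 / n` on the integers `n` all of whose prime factors divide `m`. -/
noncomputable def smoothInv (m : ℕ) : ℕ → ℝ :=
  (Nat.factoredNumbers m.primeFactors).indicator fun n => (n : ℝ)⁻¹

lemma smoothInv_nonneg (m n : ℕ) : 0 ≤ smoothInv m n :=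
  Set.indicator_nonneg (fun n _ => inv_nonneg.2 n.cast_nonneg) n

lemma ne_zero_of_smoothInv_ne_zero (h : smoothInv m n ≠ 0) : n ≠ 0 :=
  Nat.ne_zero_of_mem_factoredNumbers (Set.mem_of_indicator_ne_zero h)

lemma summable_smoothPart_idealCount_iff (A : Type*) [CommRing A] [Module.Finite ℤ A] (m : ℕ) :
    (Summable fun n : ℕ => smoothPart (idealCount A) m n / n) ↔
      Summable fun I : Ideal A => smoothInv m (Nat.card (A ⧸ I)) := by
  rw [summable_comp_iff (smoothInv_nonneg m) fun n hn =>
    finite_ideals_of_index (ne_zero_of_smoothInv_ne_zero hn)]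
  refine summable_congr fun n => ?_
  by_cases hn : n ∈ Nat.factoredNumbers m.primeFactors
  · rw [restrict_of_mem _ hn, idealCount_apply A (Nat.ne_zero_of_mem_factoredNumbers hn),
      smoothInv, Set.indicator_of_mem hn, div_eq_mul_inv]
  · rw [restrict_of_notMem _ hn, smoothInv, Set.indicator_of_notMem hn, zero_div, mul_zero]

lemma smoothInv_card_quotient_le (hinj : Function.Injective φ)
    (hindex : φ.toAddMonoidHom.range.index ≠ 0) (I : Ideal R) :
    smoothInv φ.toAddMonoidHom.range.index (Nat.card (R ⧸ I)) ≤
      φ.toAddMonoidHom.range.index *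
        smoothInv φ.toAddMonoidHom.range.index (Nat.card (O ⧸ I.map φ)) := by
  have hdvd := card_quotient_map_dvd hinj I
  set m := φ.toAddMonoidHom.range.index
  by_cases hI : Nat.card (R ⧸ I) ∈ Nat.factoredNumbers m.primeFactors
  · have hm : m ∈ Nat.factoredNumbers m.primeFactors :=
      Nat.mem_factoredNumbers'.2 fun p hp hpm => Nat.mem_primeFactors.2 ⟨hp, hpm, hindex⟩
    have hmul := Nat.mul_mem_factoredNumbers hI hm
    have hmul0 := Nat.ne_zero_of_mem_factoredNumbers hmul
    have hmap := Nat.mem_factoredNumbers_of_dvd hmul hdvd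
    have hI0 := Nat.pos_of_ne_zero (Nat.ne_zero_of_mem_factoredNumbers hI)
    have hmap0 := Nat.pos_of_ne_zero (Nat.ne_zero_of_mem_factoredNumbers hmap)
    rw [smoothInv, Set.indicator_of_mem hI, Set.indicator_of_mem hmap, ← div_eq_mul_inv,
      le_div_iff₀ (by exact_mod_cast hmap0), inv_mul_le_iff₀ (by exact_mod_cast hI0)]
    exact_mod_cast Nat.le_of_dvd (Nat.pos_of_ne_zero hmul0) hdvd
  · rw [smoothInv, Set.indicator_of_notMem hI]
    exact mul_nonneg m.cast_nonneg (smoothInv_nonneg m _)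

lemma summable_smoothPart_idealCount_of_injective [Module.Finite ℤ O] [IsAddTorsionFree O]
    (hinj : Function.Injective φ) (hindex : φ.toAddMonoidHom.range.index = m) (hm : m ≠ 0)
    (h : Summable fun n : ℕ => smoothPart (idealCount O) m n / n) :
    Summable fun n : ℕ => smoothPart (idealCount R) m n / n := by
  have : Module.Finite ℤ R := Module.Finite.of_injective φ.toAddMonoidHom.toIntLinearMap hinj
  subst hindex
  obtain ⟨C, hC⟩ := exists_card_fiber_map_le hm hinj (exists_map_eq_index_mul φ)
  rw [summable_smoothPart_idealCount_iff] at h ⊢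
  have hcomp := summable_comp_of_card_fiber_le (f := Ideal.map φ)
    (fun J => smoothInv_nonneg _ _) (fun J hJ => hC J (ne_zero_of_smoothInv_ne_zero hJ)) h
  exact (hcomp.mul_left _).of_nonneg_of_le (fun I => smoothInv_nonneg _ _)
    (smoothInv_card_quotient_le hinj hm)

end Transfer

/-! ### Sieving ideals of Dedekind domains -/

section Sieve

variable {O : Type*} [CommRing O] [IsDedekindDomain O]
  {S : Finset (Ideal O)} {P : Ideal O} {m n N : ℕ}

lemma isCoprime_iff_forall_prime_not_dvd {I J : Ideal O} (hJ : J ≠ ⊥) :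
    IsCoprime I J ↔ ∀ P, Prime P → P ∣ J → ¬ P ∣ I := by
  have hunit : IsCoprime I J ↔ IsRelPrime J I := by
    rw [isCoprime_comm, Ideal.isCoprime_iff_gcd, ← gcd_isUnit_iff_isRelPrime, Ideal.isUnit_iff,
      Ideal.one_eq_top]
  rw [hunit, UniqueFactorizationMonoid.isRelPrime_iff_no_prime_factors hJ]
  exact forall_congr' fun P => ⟨fun h hP hPJ hPI => h hPJ hPI hP, fun h hPJ hPI hP => h hP hPJ hPI⟩

lemma exists_finset_mem_iff_prime_dvd {J : Ideal O} (hJ : J ≠ ⊥) :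
    ∃ S : Finset (Ideal O), ∀ P, P ∈ S ↔ Prime P ∧ P ∣ J := by
  classical
  refine ⟨(UniqueFactorizationMonoid.normalizedFactors J).toFinset, fun P => ?_⟩
  rw [Multiset.mem_toFinset, UniqueFactorizationMonoid.mem_normalizedFactors_iff' hJ,
    UniqueFactorizationMonoid.irreducible_iff_prime, normalize_eq]
  simp

variable [Module.Free ℤ O]

/-- The nonzero ideals of norm at most `x` that no member of `S` divides. -/
def siftedIdeals (S : Finset (Ideal O)) (x : ℕ) : Set (Ideal O) :=
  {J | J ≠ ⊥ ∧ Ideal.absNorm J ≤ x ∧ ∀ P ∈ S, ¬ P ∣ J}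

lemma absNorm_eq_card_quotient (J : Ideal O) : Ideal.absNorm J = Nat.card (O ⧸ J) := by
  rw [Ideal.absNorm_apply, Submodule.cardQuot_apply]

variable [Module.Finite ℤ O]

lemma siftedIdeals_eq_union [DecidableEq (Ideal O)] (hP : Prime P) (hS : ∀ Q ∈ S, Prime Q)
    (hPS : P ∉ S) (x : ℕ) :
    siftedIdeals S x =
      siftedIdeals (insert P S) x ∪ (P * ·) '' siftedIdeals S (x / Ideal.absNorm P) := by
  have hpos : 0 < Ideal.absNorm P :=
    Nat.pos_of_ne_zero (Ideal.absNorm_eq_zero_iff.not.2 hP.ne_zero)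
  have hnorm (J : Ideal O) :
      Ideal.absNorm (P * J) ≤ x ↔ Ideal.absNorm J ≤ x / Ideal.absNorm P := by
    rw [Nat.le_div_iff_mul_le hpos, map_mul, mul_comm]
  ext J
  constructor
  · rintro ⟨hJ0, hJx, hJS⟩
    by_cases hPJ : P ∣ J
    · obtain ⟨J, rfl⟩ := hPJ
      exact Or.inr ⟨J, ⟨right_ne_zero_of_mul hJ0, (hnorm J).1 hJx,
        fun Q hQ h => hJS Q hQ (h.mul_left P)⟩, rfl⟩
    · exact Or.inl ⟨hJ0, hJx, Finset.forall_mem_insert _ _ _ |>.2 ⟨hPJ, hJS⟩⟩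
  · rintro (⟨hJ0, hJx, hJS⟩ | ⟨J, ⟨hJ0, hJx, hJS⟩, rfl⟩)
    · exact ⟨hJ0, hJx, fun Q hQ => hJS Q (Finset.mem_insert_of_mem hQ)⟩
    · refine ⟨mul_ne_zero hP.ne_zero hJ0, (hnorm J).2 hJx, fun Q hQ h => ?_⟩
      rcases (hS Q hQ).dvd_or_dvd h with hQP | hQJ
      · exact hPS (associated_iff_eq.1 ((hS Q hQ).associated_of_dvd hP hQP) ▸ hQ)
      · exact hJS Q hQ hQJ

variable [CharZero O]

lemma finite_siftedIdeals (S : Finset (Ideal O)) (x : ℕ) : (siftedIdeals S x).Finite :=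
  (Ideal.finite_setOfPred_absNorm_le x).subset fun _ hJ => hJ.2.1

lemma ncard_siftedIdeals_eq_add [DecidableEq (Ideal O)] (hP : Prime P) (hS : ∀ Q ∈ S, Prime Q)
    (hPS : P ∉ S) (x : ℕ) :
    (siftedIdeals S x).ncard =
      (siftedIdeals (insert P S) x).ncard + (siftedIdeals S (x / Ideal.absNorm P)).ncard := by
  have hdisjoint : Disjoint (siftedIdeals (insert P S) x)
      ((P * ·) '' siftedIdeals S (x / Ideal.absNorm P)) := by
    rw [Set.disjoint_left]
    rintro _ ⟨-, -, h⟩ ⟨J, -, rfl⟩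
    exact h P (Finset.mem_insert_self _ _) (dvd_mul_right _ _)
  rw [siftedIdeals_eq_union hP hS hPS, Set.ncard_union_eq hdisjoint (finite_siftedIdeals _ _)
    ((finite_siftedIdeals _ _).image _),
    Set.ncard_image_of_injective _ (mul_right_injective₀ hP.ne_zero)]

/-- Sieving by `P` multiplies the density by `1 - 1 / absNorm P`. -/
lemma exists_tendsto_ncard_siftedIdeals_div
    (h : ∃ c > 0, Tendsto (fun N : ℕ => ((siftedIdeals (∅ : Finset (Ideal O)) N).ncard : ℝ) / N)
      atTop (𝓝 c)) (hS : ∀ Q ∈ S, Prime Q) :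
    ∃ c > 0, Tendsto (fun N : ℕ => ((siftedIdeals S N).ncard : ℝ) / N) atTop (𝓝 c) := by
  classical
  induction S using Finset.induction_on with
  | empty => exact h
  | insert P S hPS ih =>
    obtain ⟨hP, hS⟩ := Finset.forall_mem_insert _ _ _ |>.1 hS
    obtain ⟨c, hc, hlim⟩ := ih hS
    have hnorm : 1 < Ideal.absNorm P := by
      have hne_zero := Ideal.absNorm_eq_zero_iff.not.2 hP.ne_zero
      have hne_one := mt Ideal.absNorm_eq_one_iff.1 (mt Ideal.isUnit_iff.2 hP.not_isUnit)
      omega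
    have hlim_div := (hlim.comp (Nat.tendsto_div_const_atTop (zero_lt_one.trans hnorm).ne')).mul
      (tendsto_natDiv_div (zero_lt_one.trans hnorm))
    refine ⟨c - c * (1 / Ideal.absNorm P), sub_pos.2 (mul_lt_of_lt_one_right hc ?_),
      (hlim.sub hlim_div).congr' ?_⟩
    · rw [one_div]
      exact inv_lt_one_of_one_lt₀ (by exact_mod_cast hnorm)
    · filter_upwards [eventually_ge_atTop (Ideal.absNorm P)] with N hN
      have hne : ((N / Ideal.absNorm P : ℕ) : ℝ) ≠ 0 := by
        exact_mod_cast (Nat.div_pos hN (by omega)).ne'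
      rw [Function.comp_apply, div_mul_div_cancel₀ hne, ← sub_div,
        ncard_siftedIdeals_eq_add hP hS hPS N, Nat.cast_add, add_sub_cancel_right]

lemma mem_siftedIdeals_iff_coprime (hm : m ≠ 0)
    (hS : ∀ P, P ∈ S ↔ Prime P ∧ P ∣ Ideal.span {(m : O)}) {J : Ideal O}
    (hJ : Nat.card (O ⧸ J) ∈ Finset.Ioc 0 N) :
    J ∈ siftedIdeals S N ↔ (Nat.card (O ⧸ J)).Coprime m := by
  obtain ⟨hpos, hle⟩ := Finset.mem_Ioc.1 hJ
  have hspan : Ideal.span {(m : O)} ≠ ⊥ := by simpa using hm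
  have hJ0 : J ≠ ⊥ := by
    rwa [Ne, ← Ideal.absNorm_eq_zero_iff, absNorm_eq_card_quotient, ← Ne, ← Nat.pos_iff_ne_zero]
  rw [coprime_card_quotient_iff hpos.ne', isCoprime_iff_forall_prime_not_dvd hspan]
  simp only [siftedIdeals, Set.mem_ofPred_eq, hS, and_imp, absNorm_eq_card_quotient]
  exact ⟨fun h => h.2.2, fun h => ⟨hJ0, hle, h⟩⟩

lemma ncard_eq_sum_card_fiber {α β : Type*} {s : Set α} (hs : s.Finite) {f : α → β}
    {t : Finset β} (h : Set.MapsTo f s t) :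
    s.ncard = ∑ n ∈ t, Nat.card {x // x ∈ s ∧ f x = n} := by
  classical
  rw [Set.ncard_eq_toFinset_card _ hs, Finset.card_eq_sum_card_fiberwise (f := f) (t := t)
    (by simpa using h)]
  refine Finset.sum_congr rfl fun n _ => ?_
  rw [← Nat.card_eq_finsetCard]
  exact Nat.card_congr (Equiv.subtypeEquivRight fun x => by simp)

lemma summatory_coprimePart_idealCount (hm : m ≠ 0)
    (hS : ∀ P, P ∈ S ↔ Prime P ∧ P ∣ Ideal.span {(m : O)}) (N : ℕ) :
    summatory (coprimePart (idealCount O) m) N = (siftedIdeals S N).ncard := by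
  have hmaps : Set.MapsTo (fun J : Ideal O => Nat.card (O ⧸ J)) (siftedIdeals S N)
      (Finset.Ioc 0 N) := fun J hJ => by
    simp only [← absNorm_eq_card_quotient, Finset.coe_Ioc, Set.mem_Ioc]
    exact ⟨Nat.pos_of_ne_zero (Ideal.absNorm_eq_zero_iff.not.2 hJ.1), hJ.2.1⟩
  rw [ncard_eq_sum_card_fiber (finite_siftedIdeals S N) hmaps, summatory, Nat.cast_sum]
  refine Finset.sum_congr rfl fun n hn => ?_
  have hiff (J : Ideal O) : J ∈ siftedIdeals S N ∧ Nat.card (O ⧸ J) = n ↔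
      n.Coprime m ∧ Nat.card (O ⧸ J) = n :=
    and_congr_left fun hJ => hJ ▸ mem_siftedIdeals_iff_coprime hm hS (hJ.symm ▸ hn)
  rw [Nat.card_congr (Equiv.subtypeEquivRight hiff)]
  by_cases hcop : n.Coprime m
  · rw [coprimePart_of_coprime _ hcop, idealCount_apply O (Finset.mem_Ioc.1 hn).1.ne']
    exact congrArg _ (Nat.card_congr (Equiv.subtypeEquivRight fun J => (and_iff_right hcop).symm))
  · simp [coprimePart_of_not_coprime _ hcop, hcop]

lemma summatory_idealCount (N : ℕ) :
    summatory (idealCount O) N = (siftedIdeals (∅ : Finset (Ideal O)) N).ncard := by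
  rw [← coprimePart_one_right (idealCount O)]
  refine summatory_coprimePart_idealCount one_ne_zero (fun P => ?_) N
  simpa [← Ideal.one_eq_top, ← isUnit_iff_dvd_one] using fun hP : Prime P => hP.not_isUnit

lemma exists_hasGrowth_coprimePart_idealCount (h : ∃ c > 0, HasGrowth (idealCount O) 0 c)
    (hm : m ≠ 0) : ∃ c > 0, HasGrowth (coprimePart (idealCount O) m) 0 c := by
  obtain ⟨S, hS⟩ := exists_finset_mem_iff_prime_dvd (J := Ideal.span {(m : O)}) (by simpa using hm)
  simp only [HasGrowth, pow_zero, mul_one, summatory_idealCount] at h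
  simpa only [HasGrowth, pow_zero, mul_one, summatory_coprimePart_idealCount hm hS] using
    exists_tendsto_ncard_siftedIdeals_div h fun P hP => ((hS P).1 hP).1

end Sieve

/-! ### Orders in products of number fields -/

section NumberField

lemma exists_hasGrowth_idealCount_ringOfIntegers (K : Type*) [Field K] [NumberField K] :
    ∃ c > 0, HasGrowth (idealCount (𝓞 K)) 0 c := by
  have hlim := (NumberField.Ideal.tendsto_norm_le_div_atTop₀ K).comp
    (tendsto_natCast_atTop_atTop (R := ℝ))
  refine ⟨_, ?_, hlim.congr fun N => ?_⟩
  · have hregulator := Units.regulator_pos K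
    have hclassNumber : 0 < classNumber K := Fintype.card_pos
    have htorsionOrder := Nat.pos_of_ne_zero (Units.torsionOrder_ne_zero K)
    have hdiscr : (discr K : ℝ) ≠ 0 := by exact_mod_cast discr_ne_zero K
    positivity
  · rw [summatory_idealCount, pow_zero, mul_one, Function.comp_apply, ← Nat.card_coe_set_eq]
    congr 2
    refine Nat.card_congr ((Equiv.subtypeSubtypeEquivSubtypeInter (· ∈ nonZeroDivisors _)
      fun I : Ideal (𝓞 K) => (Ideal.absNorm I : ℝ) ≤ N).trans (Equiv.subtypeEquivRight fun I => ?_))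
    simp [siftedIdeals]

variable {ι : Type*} [Nonempty ι] (K : ι → Type*) [∀ i, Field (K i)]
  [∀ i, NumberField (K i)] {m : ℕ}

lemma exists_hasGrowth_coprimePart_idealCount_pi [Fintype ι] (hm : m ≠ 0) :
    ∃ c > 0, HasGrowth (coprimePart (idealCount (∀ i, 𝓞 (K i))) m) (Fintype.card ι - 1) c := by
  rw [idealCount_pi, coprimePart_prod]
  exact exists_hasGrowth_prod (fun i => restrict_nonneg (idealCount_nonneg _) _)
    (fun i => exists_hasGrowth_coprimePart_idealCount
      (exists_hasGrowth_idealCount_ringOfIntegers (K i)) hm) Finset.univ_nonempty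

lemma summable_smoothPart_idealCount_pi [Finite ι] (hm : m ≠ 0) :
    Summable fun n : ℕ => smoothPart (idealCount (∀ i, 𝓞 (K i))) m n / n := by
  have := Fintype.ofFinite ι
  obtain ⟨c, hc, hcoprime⟩ := exists_hasGrowth_coprimePart_idealCount_pi K hm
  obtain ⟨C, -, hfull⟩ := exists_hasGrowth_coprimePart_idealCount_pi K one_ne_zero
  rw [coprimePart_one_right, ← smoothPart_mul_coprimePart (idealCount_isMultiplicative _) hm]
    at hfull
  exact hcoprime.summable_of_mul hfull hc (restrict_nonneg (idealCount_nonneg _) _)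
    (restrict_nonneg (idealCount_nonneg _) _)

lemma exists_hasGrowth_idealCount_of_injective [Fintype ι] {R : Type*}
    [CommRing R] {φ : R →+* ∀ i, 𝓞 (K i)} (hφ : Function.Injective φ)
    (hindex : φ.toAddMonoidHom.range.index ≠ 0) :
    ∃ c > 0, HasGrowth (idealCount R) (Fintype.card ι - 1) c := by
  obtain ⟨c, hc, hcoprime⟩ := exists_hasGrowth_coprimePart_idealCount_pi K hindex
  rw [← coprimePart_idealCount_eq hφ (exists_map_eq_index_mul φ)] at hcoprime
  have hsmooth := summable_smoothPart_idealCount_of_injective hφ rfl hindex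
    (summable_smoothPart_idealCount_pi K hindex)
  have hnonneg (s : Set ℕ) : ∀ n, 0 ≤ restrict (idealCount R) s n :=
    restrict_nonneg (idealCount_nonneg R) s
  have hgrowth := hcoprime.mul_of_summable (hnonneg _) (hnonneg _) hsmooth
  rw [smoothPart_mul_coprimePart (idealCount_isMultiplicative R) hindex] at hgrowth
  refine ⟨_, Summable.tsum_pos ?_ (fun n => mul_nonneg (hnonneg _ n) (by positivity)) 1 ?_,
    hgrowth⟩
  · exact (hsmooth.mul_left c).congr fun n => by ring
  · rw [restrict_of_mem _ (Nat.mem_factoredNumbers'.2 fun p hp h => absurd h hp.not_dvd_one),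
      idealCount_one]
    positivity

end NumberField

/-! ### Quotients of the integer polynomial ring -/

section Polynomial

lemma exists_ringOfIntegers_aeval_eq_zero_iff {g : ℤ[X]} (hg : g.Monic) (hirr : Irreducible g) :
    ∃ (K : Type) (_ : Field K) (_ : NumberField K) (θ : 𝓞 K),
      Module.finrank ℤ (𝓞 K) = g.natDegree ∧ ∀ p : ℤ[X], aeval θ p = 0 ↔ g ∣ p := by
  set G : ℚ[X] := g.map (algebraMap ℤ ℚ)
  have hG : G.Monic := hg.map _
  have : Fact (Irreducible G) := ⟨hg.irreducible_iff_irreducible_map_fraction_map.1 hirr⟩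
  have : FiniteDimensional ℚ (AdjoinRoot G) := hG.finite_adjoinRoot
  have : CharZero (AdjoinRoot G) := algebraRat.charZero _
  have : NumberField (AdjoinRoot G) := ⟨⟩
  have haeval (p : ℤ[X]) : aeval (AdjoinRoot.root G) p = 0 ↔ g ∣ p := by
    have hmk : aeval (AdjoinRoot.root G) p = AdjoinRoot.mk G (p.map (algebraMap ℤ ℚ)) := by
      rw [← AdjoinRoot.aeval_eq, aeval_map_algebraMap]
    rw [hmk, AdjoinRoot.mk_eq_zero]
    exact map_dvd_map _ (algebraMap ℤ ℚ).injective_int hg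
  have hint : IsIntegral ℤ (AdjoinRoot.root G) :=
    ⟨g, hg, by rw [← aeval_def]; exact (haeval g).2 dvd_rfl⟩
  let θ : 𝓞 (AdjoinRoot G) := ⟨AdjoinRoot.root G, hint⟩
  have hθ (p : ℤ[X]) : algebraMap (𝓞 (AdjoinRoot G)) (AdjoinRoot G) (aeval θ p) =
      aeval (AdjoinRoot.root G) p := by
    rw [← aeval_algebraMap_apply]
    rfl
  refine ⟨AdjoinRoot G, inferInstance, inferInstance, θ, ?_, fun p => ?_⟩
  · exact (RingOfIntegers.rank _).trans
      ((finrank_quotient_span_eq_natDegree' hG).trans (hg.natDegree_map _))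
  · rw [← haeval p, ← hθ, FaithfulSMul.algebraMap_eq_zero_iff]

lemma isRelPrime_of_monic_of_irreducible {A : Type*} [CommRing A] [IsDomain A] {g h : A[X]}
    (hg : g.Monic) (hh : h.Monic) (hgirr : Irreducible g) (hhirr : Irreducible h) (hne : g ≠ h) :
    IsRelPrime g h :=
  hgirr.isRelPrime_iff_not_dvd.2 fun hdvd =>
    hne (eq_of_monic_of_associated hg hh (hgirr.associated_of_dvd hhirr hdvd))

lemma index_range_ne_zero_of_injective {M N : Type*} [AddCommGroup M] [AddCommGroup N]
    [Module.Free ℤ N] [Module.Finite ℤ N] {f : M →+ N} (hf : Function.Injective f)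
    (hrank : Module.finrank ℤ M = Module.finrank ℤ N) : f.range.index ≠ 0 := by
  have : Finite (N ⧸ LinearMap.range f.toIntLinearMap) :=
    Submodule.finiteQuotientOfFreeOfRankEq _
      ((LinearMap.finrank_range_of_inj (f := f.toIntLinearMap) hf).trans hrank)
  exact (Nat.card_pos (α := N ⧸ LinearMap.range f.toIntLinearMap)).ne'

lemma exists_injective_ringHom_pi_ringOfIntegers {ι : Type*} [Fintype ι] {g : ι → ℤ[X]}
    (hmonic : ∀ i, (g i).Monic) (hirr : ∀ i, Irreducible (g i)) (hinj : Function.Injective g) :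
    ∃ (K : ι → Type) (_ : ∀ i, Field (K i)) (_ : ∀ i, NumberField (K i))
      (φ : ℤ[X] ⧸ Ideal.span {∏ i, g i} →+* ∀ i, 𝓞 (K i)),
      Function.Injective φ ∧ φ.toAddMonoidHom.range.index ≠ 0 := by
  choose K _ _ θ hrank hθ using fun i =>
    exists_ringOfIntegers_aeval_eq_zero_iff (hmonic i) (hirr i)
  let evalRoots : ℤ[X] →+* ∀ i, 𝓞 (K i) := RingHom.pi fun i => (aeval (θ i)).toRingHom
  have hker : RingHom.ker evalRoots = Ideal.span {∏ i, g i} := by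
    ext p
    have hpairwise : Pairwise (Function.onFun IsRelPrime g) := fun i j hij =>
      isRelPrime_of_monic_of_irreducible (hmonic i) (hmonic j) (hirr i) (hirr j) (hinj.ne hij)
    calc p ∈ RingHom.ker evalRoots ↔ ∀ i, g i ∣ p := by
          rw [RingHom.mem_ker, funext_iff]
          exact forall_congr' fun i => hθ i p
      _ ↔ p ∈ Ideal.span {∏ i, g i} := by
          rw [Ideal.mem_span_singleton]
          exact ⟨Fintype.prod_dvd_of_isRelPrime hpairwise,
            fun h i => (Finset.dvd_prod_of_mem g (Finset.mem_univ i)).trans h⟩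
  have hlift : Function.Injective (Ideal.Quotient.lift _ evalRoots hker.ge) :=
    RingHom.lift_injective_of_ker_le_ideal _ _ hker.le
  refine ⟨K, inferInstance, inferInstance, Ideal.Quotient.lift _ evalRoots hker.ge, hlift,
    index_range_ne_zero_of_injective hlift ?_⟩
  rw [finrank_quotient_span_eq_natDegree' (monic_prod_of_monic _ _ fun i _ => hmonic i),
    natDegree_prod_of_monic _ _ fun i _ => hmonic i, Module.finrank_pi_fintype]
  exact Finset.sum_congr rfl fun i _ => (hrank i).symm

end Polynomial

end IdealCount

open IdealCount NumberField in
theorem ideal_count_quotient_separable_general {ι : Type*} [Fintype ι] [Nonempty ι]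
    (K : ι → Type*) [∀ i, Field (K i)] [∀ i, NumberField (K i)] {R : Type*} [CommRing R]
    (φ : R →+* ∀ i, 𝓞 (K i)) (hφ : Function.Injective φ)
    (hindex : φ.toAddMonoidHom.range.index ≠ 0) :
    ∃ c : ℝ, 0 < c ∧
      Tendsto (fun N : ℕ => (∑ n ∈ Finset.Icc 1 N,
          (Nat.card {I : Ideal R // Nat.card (R ⧸ I) = n} : ℝ)) /
        ((N : ℝ) * (Real.log N) ^ (Fintype.card ι - 1)))
        atTop (𝓝 c) := by
  obtain ⟨c, hc, hgrowth⟩ := exists_hasGrowth_idealCount_of_injective K hφ hindex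
  refine ⟨c, hc, hgrowth.tendsto_div_log.congr fun N => congrArg (· / _) ?_⟩
  exact Finset.sum_congr rfl fun n hn => idealCount_apply R (Finset.mem_Ioc.1 hn).1.ne'

/-- For `f = g₁⋯g_k` a product of `k` pairwise distinct monic irreducible polynomials over ℤ,
the number of finite-index ideals of `ℤ[X]/(f)` of index at most `N` grows like
`c·N·(log N)^{k-1}` for some constant `c > 0`. -/
theorem ideal_count_quotient_separable (k : ℕ) (hk : 0 < k) (g : Fin k → Polynomial ℤ)
    (hirr : ∀ i, Irreducible (g i)) (hmonic : ∀ i, (g i).Monic)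
    (hdist : Function.Injective g)
    (f : Polynomial ℤ) (hf : f = ∏ i, g i) (hfmonic : f.Monic) :
    ∃ c : ℝ, 0 < c ∧
      Tendsto (fun N : ℕ => (∑ n ∈ Finset.Icc 1 N,
          (Nat.card {I : Ideal (Polynomial ℤ ⧸ Ideal.span {f}) //
            Nat.card ((Polynomial ℤ ⧸ Ideal.span {f}) ⧸ I) = n} : ℝ)) /
        ((N : ℝ) * (Real.log N) ^ (k - 1)))
        atTop (𝓝 c) := by
  subst hf
  obtain ⟨K, _, _, φ, hφ, hindex⟩ :=
    IdealCount.exists_injective_ringHom_pi_ringOfIntegers hmonic hirr hdist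
  have : Nonempty (Fin k) := ⟨⟨0, hk⟩⟩
  simpa using ideal_count_quotient_separable_general K φ hφ hindex
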